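/- arXiv:1812.05577 — 3 statements merged into one kernel-verified Lean document; each statement's English description precedes it below -/
import Mathlib

section
/- Let 𝓛 and 𝓛' be ergodic reversible generator matrices on the same finite state space Ω (with |Ω| ≥ 2), with stationary distributions π and π' respectively. Let ω assign a positive weight to each transition of 𝓛. For each transition (α,β) of 𝓛', let Γ_{α,β} be a nonempty finite set of 𝓛-paths from α to β together with a flow g_{α,β} : Γ_{α,β} → [0,1] satisfying Σ_{γ∈Γ_{α,β}} g_{α,β}(γ) = 1. Set b = max_{α∈Ω} π(α)/π'(α), and for each transition (σ,η) of 𝓛 define the congestion ρ_{σ,η} = (1/(π(σ)·𝓛[σ→η]·ω(σ,η))) · Σ over all transitions (α,β) of 𝓛' and all paths γ ∈ Γ_{α,β} that use the transition (σ,η) of g_{α,β}(γ)·π'(α)·𝓛'[α→β]·|γ|_ω, where each use of (σ,η) in γ is counted with multiplicity; let ρ_max be the maximum of ρ_{σ,η} over all transitions (σ,η) of 𝓛. Then τ(𝓛) ≤ b²·ρ_max·τ(𝓛'). -/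
/-!
Write `τ` and `τ'` for the two relaxation times. The bound is the chain of inequalities, valid for
every `f`,

  `Var_π f ≤ b² Var_π' f ≤ b² τ' 𝓔'(f, f) ≤ b² τ' ρ_max 𝓔(f, f)`,

combined with the fact that any constant in a Poincaré inequality bounds the relaxation time
(`relaxTime_le_of_poincare`).

* The first step is pointwise, from `π ≤ b π'`.
* The second one is the definition of `τ'`, but it needs the gap of `𝓛'` to be positive, since
  otherwise `1 / specGap` is not the optimal Poincaré constant. Positivity comes from ergodicity:
  `(f x - f y)²` is at most a constant (depending on `x, y` only) times `𝓔'(f, f)`, by induction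
  along a chain of transitions (`exists_sq_sub_le`).
* The third one (`dirForm_le_of_congestion`) is the flow argument. For an `𝓛`-path `γ` from `α` to
  `β`, the Cauchy–Schwarz inequality gives `(f α - f β)² ≤ |γ|_ω · ∑ (f σ - f η)² / ω(σ, η)`, the sum
  being over the steps of `γ` (`sq_sub_le_pathWeight_mul`). Averaging over the flow, summing over
  the transitions of `𝓛'` and exchanging the sums, the coefficient of `(f σ - f η)² / ω(σ, η)` is
  `π(σ) 𝓛[σ→η] ω(σ, η) ρ_{σ,η}`.
-/


open Finset
open scoped Classical

section Markov

variable {Ω : Type*} [Fintype Ω]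

/-- A generator matrix: nonnegative off-diagonal entries, zero row sums. -/
def IsGenerator (L : Ω → Ω → ℝ) : Prop :=
  (∀ x y : Ω, x ≠ y → 0 ≤ L x y) ∧ (∀ x : Ω, ∑ y : Ω, L x y = 0)

/-- A transition of a generator matrix. -/
def IsTransition (L : Ω → Ω → ℝ) (x y : Ω) : Prop := x ≠ y ∧ 0 < L x y

/-- Ergodicity: the directed graph of transitions is strongly connected. -/
def IsErgodicGen (L : Ω → Ω → ℝ) : Prop :=
  ∀ x y : Ω, Relation.ReflTransGen (IsTransition L) x y

/-- Reversibility with respect to a distribution π. -/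
def IsReversible (L : Ω → Ω → ℝ) (π : Ω → ℝ) : Prop :=
  ∀ x y : Ω, π x * L x y = π y * L y x

/-- The variance form. -/
noncomputable def VarForm (π : Ω → ℝ) (f : Ω → ℝ) : ℝ :=
  (1 / 2) * ∑ a : Ω, ∑ b : Ω, π a * π b * (f a - f b) ^ 2

/-- The Dirichlet form. -/
noncomputable def DirForm (π : Ω → ℝ) (L : Ω → Ω → ℝ) (f : Ω → ℝ) : ℝ :=
  (1 / 2) * ∑ a : Ω, ∑ b : Ω, π a * L a b * (f a - f b) ^ 2

/-- The spectral gap: infimum (= minimum) of the Rayleigh quotient over nonconstant functions. -/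
noncomputable def specGap (π : Ω → ℝ) (L : Ω → Ω → ℝ) : ℝ :=
  sInf {r : ℝ | ∃ f : Ω → ℝ, (∃ a b : Ω, f a ≠ f b) ∧ r = DirForm π L f / VarForm π f}

/-- The relaxation time, with the convention that it equals 1 on a one-point space. -/
noncomputable def relaxTime (π : Ω → ℝ) (L : Ω → Ω → ℝ) : ℝ :=
  if ∃ a b : Ω, a ≠ b then 1 / specGap π L else 1

/-- The uniform distribution on a finite type. -/
noncomputable def unif (Ω : Type*) [Fintype Ω] : Ω → ℝ := fun _ => 1 / (Fintype.card Ω : ℝ)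

end Markov

section Paths

variable {Ω : Type*} [Fintype Ω] [DecidableEq Ω]

/-- `γ` is an `L`-path from `a` to `b`: a sequence of at least two states, starting at `a`,
ending at `b`, each consecutive pair being a transition of `L`. -/
def IsLPath (L : Ω → Ω → ℝ) (a b : Ω) (γ : List Ω) : Prop :=
  2 ≤ γ.length ∧ γ.head? = some a ∧ γ.getLast? = some b ∧ γ.Chain' (IsTransition L)

/-- The `ω`-weight of a path: the sum of the weights of its steps. -/
noncomputable def pathWeight (ω : Ω → Ω → ℝ) (γ : List Ω) : ℝ :=
  ((γ.zip γ.tail).map fun p => ω p.1 p.2).sum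

/-- The length `|γ|` of a path (number of steps). -/
def pathLen (γ : List Ω) : ℕ := γ.length - 1

/-- The number of times the path `γ` uses the transition `(σ,η)`, with multiplicity. -/
def pathUses (γ : List Ω) (σ η : Ω) : ℕ := (γ.zip γ.tail).count (σ, η)

end Paths

/-- The congestion `ρ_{σ,η}` of a transition `(σ,η)` of `L` for a family of flows
`(Γ_{α,β}, g_{α,β})` along transitions of `L'`. -/
noncomputable def congestion {Ω : Type*} [Fintype Ω] [DecidableEq Ω]
    (L L' : Ω → Ω → ℝ) (π π' : Ω → ℝ) (ω : Ω → Ω → ℝ)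
    (Γ : Ω → Ω → Finset (List Ω)) (g : Ω → Ω → List Ω → ℝ) (σ η : Ω) : ℝ :=
  (1 / (π σ * L σ η * ω σ η)) *
    ∑ α : Ω, ∑ β : Ω,
      if IsTransition L' α β then
        ∑ γ ∈ Γ α β, (pathUses γ σ η : ℝ) * g α β γ * π' α * L' α β * pathWeight ω γ
      else 0

/-! ### Dirichlet and variance forms, and the relaxation time -/

section Forms

variable {Ω : Type*} [Fintype Ω]

/-- Diagonal entries of a generator are nonpositive, but they are multiplied by `(f a - f a)² = 0`. -/
lemma dirForm_term_nonneg {L : Ω → Ω → ℝ} {π : Ω → ℝ} (hgen : IsGenerator L)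
    (hπ : ∀ x, 0 < π x) (f : Ω → ℝ) (x y : Ω) : 0 ≤ π x * L x y * (f x - f y) ^ 2 := by
  by_cases hxy : x = y
  · simp [hxy]
  · exact mul_nonneg (mul_nonneg (hπ x).le (hgen.1 x y hxy)) (sq_nonneg _)

lemma dirForm_nonneg {L : Ω → Ω → ℝ} {π : Ω → ℝ} (hgen : IsGenerator L)
    (hπ : ∀ x, 0 < π x) (f : Ω → ℝ) : 0 ≤ DirForm π L f :=
  mul_nonneg (by norm_num)
    (sum_nonneg fun x _ => sum_nonneg fun y _ => dirForm_term_nonneg hgen hπ f x y)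

lemma dirForm_term_le {L : Ω → Ω → ℝ} {π : Ω → ℝ} (hgen : IsGenerator L)
    (hπ : ∀ x, 0 < π x) (f : Ω → ℝ) (x y : Ω) :
    π x * L x y * (f x - f y) ^ 2 ≤ 2 * DirForm π L f := by
  have h1 : π x * L x y * (f x - f y) ^ 2 ≤ ∑ b : Ω, π x * L x b * (f x - f b) ^ 2 :=
    single_le_sum (f := fun b => π x * L x b * (f x - f b) ^ 2)
      (fun b _ => dirForm_term_nonneg hgen hπ f x b) (mem_univ y)
  have h2 : ∑ b : Ω, π x * L x b * (f x - f b) ^ 2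
      ≤ ∑ a : Ω, ∑ b : Ω, π a * L a b * (f a - f b) ^ 2 :=
    single_le_sum (f := fun a => ∑ b : Ω, π a * L a b * (f a - f b) ^ 2)
      (fun a _ => sum_nonneg fun b _ => dirForm_term_nonneg hgen hπ f a b) (mem_univ x)
  unfold DirForm
  linarith

lemma varForm_pos {π : Ω → ℝ} (hπ : ∀ x, 0 < π x) {f : Ω → ℝ} (hf : ∃ a b : Ω, f a ≠ f b) :
    0 < VarForm π f := by
  obtain ⟨a, b, hab⟩ := hf
  have h0 : ∀ x y, 0 ≤ π x * π y * (f x - f y) ^ 2 := fun x y =>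
    mul_nonneg (mul_nonneg (hπ x).le (hπ y).le) (sq_nonneg _)
  refine mul_pos (by norm_num) (sum_pos' (fun x _ => sum_nonneg fun y _ => h0 x y)
    ⟨a, mem_univ a, sum_pos' (fun y _ => h0 a y) ⟨b, mem_univ b, ?_⟩⟩)
  have := sub_ne_zero.2 hab
  have := hπ a
  have := hπ b
  positivity

lemma varForm_eq_zero (π : Ω → ℝ) {f : Ω → ℝ} (hf : ¬ ∃ a b : Ω, f a ≠ f b) :
    VarForm π f = 0 := by
  push Not at hf
  have h : ∀ a b, f a - f b = 0 := fun a b => sub_eq_zero.2 (hf a b)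
  simp [VarForm, h]

/-- A constant in the Poincaré inequality bounds the gap and the relaxation time. It is automatically positive,
because the variance of a nonconstant function is. -/
lemma relaxTime_le_of_poincare (hne : ∃ a b : Ω, a ≠ b) {L : Ω → Ω → ℝ} {π : Ω → ℝ}
    (hgen : IsGenerator L) (hπ : ∀ x, 0 < π x) {C : ℝ}
    (h : ∀ f : Ω → ℝ, VarForm π f ≤ C * DirForm π L f) :
    0 < C ∧ C⁻¹ ≤ specGap π L ∧ relaxTime π L ≤ C := by
  obtain ⟨a, b, hab⟩ := hne
  have hf : ∃ x y : Ω, (Pi.single a 1 : Ω → ℝ) x ≠ (Pi.single a 1 : Ω → ℝ) y :=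
    ⟨a, b, by simp [hab.symm]⟩
  have hC : 0 < C :=
    pos_of_mul_pos_left ((varForm_pos hπ hf).trans_le (h _)) (dirForm_nonneg hgen hπ _)
  have hgap : C⁻¹ ≤ specGap π L := by
    refine le_csInf ⟨_, _, hf, rfl⟩ ?_
    rintro r ⟨f, hf, rfl⟩
    rw [le_div_iff₀ (varForm_pos hπ hf), inv_mul_le_iff₀ hC]
    exact h f
  refine ⟨hC, hgap, ?_⟩
  rw [relaxTime, if_pos ⟨a, b, hab⟩, one_div]
  exact inv_le_of_inv_le₀ hC hgap

/-- Ergodicity bounds every squared increment of `f` by the Dirichlet form. -/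
lemma exists_sq_sub_le {L : Ω → Ω → ℝ} {π : Ω → ℝ} (hgen : IsGenerator L)
    (herg : IsErgodicGen L) (hπ : ∀ x, 0 < π x) (x y : Ω) :
    ∃ K : ℝ, ∀ f : Ω → ℝ, (f x - f y) ^ 2 ≤ K * DirForm π L f := by
  induction herg x y with
  | refl => exact ⟨0, fun f => by simp⟩
  | @tail y z _ hyz ih =>
    obtain ⟨K, hK⟩ := ih
    have hp : 0 < π y * L y z := mul_pos (hπ y) hyz.2
    refine ⟨2 * K + 2 * (2 / (π y * L y z)), fun f => ?_⟩
    have h1 : (f y - f z) ^ 2 ≤ 2 / (π y * L y z) * DirForm π L f := by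
      rw [div_mul_eq_mul_div, le_div_iff₀ hp]
      linarith [dirForm_term_le hgen hπ f y z]
    nlinarith [hK f, sq_nonneg ((f x - f y) - (f y - f z))]

lemma exists_poincare {L : Ω → Ω → ℝ} {π : Ω → ℝ} (hgen : IsGenerator L)
    (herg : IsErgodicGen L) (hπ : ∀ x, 0 < π x) :
    ∃ C : ℝ, ∀ f : Ω → ℝ, VarForm π f ≤ C * DirForm π L f := by
  choose K hK using exists_sq_sub_le hgen herg hπ
  refine ⟨(1 / 2) * ∑ a : Ω, ∑ b : Ω, π a * π b * K a b, fun f => ?_⟩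
  rw [VarForm, mul_assoc, sum_mul]
  simp_rw [sum_mul]
  refine mul_le_mul_of_nonneg_left (sum_le_sum fun a _ => sum_le_sum fun b _ => ?_) (by norm_num)
  rw [mul_assoc _ (K a b)]
  exact mul_le_mul_of_nonneg_left (hK a b f) (mul_nonneg (hπ a).le (hπ b).le)

/-- For an ergodic generator the relaxation time is itself a Poincaré constant. -/
lemma varForm_le_relaxTime_mul (hne : ∃ a b : Ω, a ≠ b) {L : Ω → Ω → ℝ} {π : Ω → ℝ}
    (hgen : IsGenerator L) (herg : IsErgodicGen L) (hπ : ∀ x, 0 < π x) (f : Ω → ℝ) :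
    VarForm π f ≤ relaxTime π L * DirForm π L f := by
  obtain ⟨C, hC⟩ := exists_poincare hgen herg hπ
  obtain ⟨hC0, hgap, -⟩ := relaxTime_le_of_poincare hne hgen hπ hC
  have hpos : 0 < specGap π L := (inv_pos.2 hC0).trans_le hgap
  rw [relaxTime, if_pos hne, one_div_mul_eq_div, le_div_iff₀ hpos]
  by_cases hf : ∃ a b : Ω, f a ≠ f b
  · have hle : specGap π L ≤ DirForm π L f / VarForm π f := by
      refine csInf_le ⟨0, ?_⟩ ⟨f, hf, rfl⟩
      rintro r ⟨f', hf', rfl⟩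
      exact div_nonneg (dirForm_nonneg hgen hπ f') (varForm_pos hπ hf').le
    rw [le_div_iff₀ (varForm_pos hπ hf)] at hle
    linarith
  · rw [varForm_eq_zero π hf, zero_mul]
    exact dirForm_nonneg hgen hπ f

lemma varForm_le_of_le_mul {π π' : Ω → ℝ} {b : ℝ} (hπ : ∀ x, 0 < π x)
    (hb : ∀ x, π x ≤ b * π' x) (f : Ω → ℝ) : VarForm π f ≤ b ^ 2 * VarForm π' f := by
  have h : b ^ 2 * VarForm π' f
      = 1 / 2 * ∑ x : Ω, ∑ y : Ω, (b * π' x) * (b * π' y) * (f x - f y) ^ 2 := by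
    rw [VarForm, mul_left_comm, mul_sum]
    simp_rw [mul_sum]
    exact sum_congr rfl fun x _ => sum_congr rfl fun y _ => by ring
  rw [h, VarForm]
  refine mul_le_mul_of_nonneg_left (sum_le_sum fun x _ => sum_le_sum fun y _ => ?_) (by norm_num)
  exact mul_le_mul_of_nonneg_right
    (mul_le_mul (hb x) (hb y) (hπ y).le ((hπ x).le.trans (hb x))) (sq_nonneg _)

end Forms

/-! ### The flow argument -/

section Flows

variable {Ω : Type*}

/-- A sum over the entries of a list of pairs, grouped by the value of the entry. -/
lemma sum_map_eq_sum_count [Fintype Ω] [DecidableEq Ω] (l : List (Ω × Ω)) (h : Ω → Ω → ℝ) :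
    (l.map fun p => h p.1 p.2).sum = ∑ σ : Ω, ∑ η : Ω, (l.count (σ, η) : ℝ) * h σ η := by
  induction l with
  | nil => simp
  | cons p l ih =>
    obtain ⟨x, y⟩ := p
    rw [List.map_cons, List.sum_cons, ih]
    simp [List.count_cons, add_mul, sum_add_distrib, ite_and, add_comm]

/-- A sum over the steps of a path, grouped by the transition used. -/
lemma sum_steps_eq [Fintype Ω] [DecidableEq Ω] (γ : List Ω) (h : Ω → Ω → ℝ) :
    ((γ.zip γ.tail).map fun p => h p.1 p.2).sum
      = ∑ σ : Ω, ∑ η : Ω, (pathUses γ σ η : ℝ) * h σ η :=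
  sum_map_eq_sum_count _ h

lemma pathUses_eq_zero [DecidableEq Ω] {L : Ω → Ω → ℝ} {γ : List Ω}
    (hγ : γ.IsChain (IsTransition L)) {σ η : Ω} (h : ¬ IsTransition L σ η) : pathUses γ σ η = 0 := by
  refine List.count_eq_zero_of_not_mem fun hmem => h ?_
  induction γ with
  | nil => simp at hmem
  | cons a l ih =>
    cases l with
    | nil => simp at hmem
    | cons c l =>
      rw [List.isChain_cons_cons] at hγ
      simp only [List.tail_cons, List.zip_cons_cons, List.mem_cons, Prod.mk.injEq] at hmem
      rcases hmem with ⟨rfl, rfl⟩ | hmem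
      · exact hγ.1
      · exact ih hγ.2 hmem

/-- The two-term Cauchy–Schwarz step: if `y² ≤ W S` then `(x + y)² ≤ (w + W) (x² / w + S)`. -/
lemma add_sq_le_of_sq_le {w W S x y : ℝ} (hw : 0 < w) (hW : 0 ≤ W) (hS : 0 ≤ S)
    (h : y ^ 2 ≤ W * S) : (x + y) ^ 2 ≤ (w + W) * (x ^ 2 / w + S) := by
  obtain ⟨p, hp⟩ : ∃ p, p = x ^ 2 / w := ⟨_, rfl⟩
  have hp0 : 0 ≤ p := hp ▸ by positivity
  have hx : x ^ 2 = w * p := by rw [hp]; field_simp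
  rw [← hp]
  -- AM-GM: `(2xy)² ≤ 4 (w S) (W p) ≤ (w S + W p)²`
  have hxy : 2 * x * y ≤ w * S + W * p := by
    refine le_of_sq_le_sq ?_ (by positivity)
    have : x ^ 2 * y ^ 2 ≤ w * p * (W * S) := by
      rw [hx]; exact mul_le_mul_of_nonneg_left h (by positivity)
    nlinarith [sq_nonneg (w * S - W * p)]
  nlinarith

/-- Cauchy–Schwarz along a path. -/
lemma sq_sub_le_pathWeight_mul {L ω : Ω → Ω → ℝ} (hω : ∀ x y, IsTransition L x y → 0 < ω x y)
    (f : Ω → ℝ) (γ : List Ω) (a b : Ω) (ha : γ.head? = some a) (hb : γ.getLast? = some b)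
    (hγ : γ.IsChain (IsTransition L)) :
    0 ≤ pathWeight ω γ ∧
    0 ≤ ((γ.zip γ.tail).map fun p => (f p.1 - f p.2) ^ 2 / ω p.1 p.2).sum ∧
    (f a - f b) ^ 2 ≤ pathWeight ω γ *
      ((γ.zip γ.tail).map fun p => (f p.1 - f p.2) ^ 2 / ω p.1 p.2).sum := by
  induction γ generalizing a with
  | nil => simp at ha
  | cons x l ih =>
    obtain rfl : x = a := by simpa using ha
    cases l with
    | nil =>
      obtain rfl : x = b := by simpa using hb
      simp [pathWeight]
    | cons c l =>
      rw [List.isChain_cons_cons] at hγ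
      obtain ⟨hW, hS, h⟩ := ih c rfl (by simpa using hb) hγ.2
      have hw := hω _ _ hγ.1
      simp only [pathWeight, List.tail_cons, List.zip_cons_cons, List.map_cons,
        List.sum_cons] at hW hS h ⊢
      refine ⟨by positivity, by positivity, ?_⟩
      have := add_sq_le_of_sq_le (x := f x - f c) hw hW hS h
      simpa using this

/-- The unnormalized congestion: the weighted flow through `(σ, η)`. -/
noncomputable def flowLoad [Fintype Ω] [DecidableEq Ω] (L' : Ω → Ω → ℝ) (π' : Ω → ℝ) (ω : Ω → Ω → ℝ)
    (Γ : Ω → Ω → Finset (List Ω)) (g : Ω → Ω → List Ω → ℝ) (σ η : Ω) : ℝ :=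
  ∑ α : Ω, ∑ β : Ω,
    if IsTransition L' α β then
      ∑ γ ∈ Γ α β, (pathUses γ σ η : ℝ) * g α β γ * π' α * L' α β * pathWeight ω γ
    else 0

/-- A flow for the transitions of `𝓛'` whose congestion is at most `ρ` compares the Dirichlet
forms. -/
lemma dirForm_le_of_congestion [Fintype Ω] [DecidableEq Ω] {L L' : Ω → Ω → ℝ} {π π' : Ω → ℝ}
    (hgen : IsGenerator L) (hgen' : IsGenerator L')
    (hπ : ∀ x, 0 < π x) (hπ' : ∀ x, 0 < π' x)
    {ω : Ω → Ω → ℝ} (hω : ∀ x y, IsTransition L x y → 0 < ω x y)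
    {Γ : Ω → Ω → Finset (List Ω)} {g : Ω → Ω → List Ω → ℝ}
    (hΓ : ∀ α β, IsTransition L' α β → ∀ γ ∈ Γ α β, IsLPath L α β γ)
    (hg : ∀ α β, IsTransition L' α β → ∀ γ ∈ Γ α β, 0 ≤ g α β γ)
    (hsum : ∀ α β, IsTransition L' α β → ∑ γ ∈ Γ α β, g α β γ = 1) {ρ : ℝ}
    (hρ : ∀ σ η, IsTransition L σ η → congestion L L' π π' ω Γ g σ η ≤ ρ) (f : Ω → ℝ) :
    DirForm π' L' f ≤ ρ * DirForm π L f := by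
  -- the flow bound for one transition of `L'`
  have h1 : ∀ α β, π' α * L' α β * (f α - f β) ^ 2 ≤
      ∑ σ : Ω, ∑ η : Ω, (f σ - f η) ^ 2 / ω σ η *
        if IsTransition L' α β then
          ∑ γ ∈ Γ α β, (pathUses γ σ η : ℝ) * g α β γ * π' α * L' α β * pathWeight ω γ
        else 0 := by
    intro α β
    by_cases ht : IsTransition L' α β
    · simp only [if_pos ht]
      calc π' α * L' α β * (f α - f β) ^ 2
          = ∑ γ ∈ Γ α β, g α β γ * (π' α * L' α β * (f α - f β) ^ 2) := by
            rw [← sum_mul, hsum α β ht, one_mul]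
        _ ≤ ∑ γ ∈ Γ α β, g α β γ * (π' α * L' α β * (pathWeight ω γ *
              ∑ σ : Ω, ∑ η : Ω, (pathUses γ σ η : ℝ) * ((f σ - f η) ^ 2 / ω σ η))) := by
            refine sum_le_sum fun γ hγ => mul_le_mul_of_nonneg_left
              (mul_le_mul_of_nonneg_left ?_ (mul_nonneg (hπ' α).le ht.2.le)) (hg α β ht γ hγ)
            obtain ⟨-, ha, hb, hc⟩ := hΓ α β ht γ hγ
            rw [← sum_steps_eq γ fun σ η => (f σ - f η) ^ 2 / ω σ η]
            exact (sq_sub_le_pathWeight_mul hω f γ α β ha hb hc).2.2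
        _ = _ := by
            simp_rw [mul_sum]
            rw [sum_comm]
            refine sum_congr rfl fun σ _ => ?_
            rw [sum_comm]
            exact sum_congr rfl fun η _ => sum_congr rfl fun γ _ => by ring
    · have h0 : π' α * L' α β * (f α - f β) ^ 2 = 0 := by
        by_cases hab : α = β
        · simp [hab]
        · rw [le_antisymm (not_lt.1 fun h => ht ⟨hab, h⟩) (hgen'.1 α β hab)]
          ring
      simp [h0, ht]
  -- the congestion bound for one pair of states
  have h2 : ∀ σ η, (f σ - f η) ^ 2 / ω σ η * flowLoad L' π' ω Γ g σ η ≤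
      ρ * (π σ * L σ η * (f σ - f η) ^ 2) := by
    intro σ η
    by_cases ht : IsTransition L σ η
    · have hpos : 0 < π σ * L σ η * ω σ η := mul_pos (mul_pos (hπ σ) ht.2) (hω σ η ht)
      have hload : flowLoad L' π' ω Γ g σ η ≤ ρ * (π σ * L σ η * ω σ η) := by
        rw [← div_le_iff₀ hpos, ← one_div_mul_eq_div]
        exact hρ σ η ht
      have hw := hω σ η ht
      calc _ ≤ (f σ - f η) ^ 2 / ω σ η * (ρ * (π σ * L σ η * ω σ η)) :=
            mul_le_mul_of_nonneg_left hload (by positivity)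
        _ = _ := by field_simp
    · have hl : flowLoad L' π' ω Γ g σ η = 0 := by
        refine sum_eq_zero fun α _ => sum_eq_zero fun β _ => ?_
        split_ifs with h
        · refine sum_eq_zero fun γ hγ => ?_
          rw [pathUses_eq_zero (hΓ α β h γ hγ).2.2.2 ht]
          simp
        · rfl
      have h0 : π σ * L σ η * (f σ - f η) ^ 2 = 0 := by
        by_cases hab : σ = η
        · simp [hab]
        · rw [le_antisymm (not_lt.1 fun h => ht ⟨hab, h⟩) (hgen.1 σ η hab)]
          ring
      simp [hl, h0]
  have h3 : ∑ α : Ω, ∑ β : Ω, π' α * L' α β * (f α - f β) ^ 2 ≤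
      ∑ σ : Ω, ∑ η : Ω, ρ * (π σ * L σ η * (f σ - f η) ^ 2) := by
    refine (sum_le_sum fun α _ => sum_le_sum fun β _ => h1 α β).trans
      (le_of_eq_of_le ?_ (sum_le_sum fun σ _ => sum_le_sum fun η _ => h2 σ η))
    simp_rw [flowLoad, mul_sum (ι := Ω)]
    -- move `σ` and then `η` outward past `α` and `β`
    exact (sum_congr rfl fun α _ => sum_comm).trans (sum_comm.trans (sum_congr rfl fun σ _ =>
      (sum_congr rfl fun α _ => sum_comm).trans sum_comm))
  simp_rw [← mul_sum] at h3
  unfold DirForm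
  linarith

end Flows

/-- weighted multi-commodity flows method:
`τ(𝓛) ≤ b² · ρ_max · τ(𝓛')`. -/
theorem weighted_multicommodity_flows
    {Ω : Type} [Fintype Ω] [DecidableEq Ω] (hcard : 2 ≤ Fintype.card Ω)
    (L L' : Ω → Ω → ℝ) (π π' : Ω → ℝ)
    (hgen : IsGenerator L) (hgen' : IsGenerator L')
    (herg : IsErgodicGen L) (herg' : IsErgodicGen L')
    (hπpos : ∀ x, 0 < π x) (hπsum : ∑ x : Ω, π x = 1)
    (hπ'pos : ∀ x, 0 < π' x) (hπ'sum : ∑ x : Ω, π' x = 1)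
    (hrev : IsReversible L π) (hrev' : IsReversible L' π')
    (ω : Ω → Ω → ℝ) (hω : ∀ x y, IsTransition L x y → 0 < ω x y)
    (Γ : Ω → Ω → Finset (List Ω)) (g : Ω → Ω → List Ω → ℝ)
    (hΓ : ∀ α β, IsTransition L' α β →
      (Γ α β).Nonempty ∧ ∀ γ ∈ Γ α β, IsLPath L α β γ)
    (hflow : ∀ α β, IsTransition L' α β →
      (∀ γ ∈ Γ α β, 0 ≤ g α β γ ∧ g α β γ ≤ 1) ∧ ∑ γ ∈ Γ α β, g α β γ = 1)
    (b : ℝ) (hb : IsGreatest {r : ℝ | ∃ α : Ω, r = π α / π' α} b)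
    (ρmax : ℝ)
    (hρ : IsGreatest
      {r : ℝ | ∃ σ η : Ω, IsTransition L σ η ∧ r = congestion L L' π π' ω Γ g σ η} ρmax) :
    relaxTime π L ≤ b ^ 2 * ρmax * relaxTime π' L' := by
  have hne : ∃ x y : Ω, x ≠ y := by
    have : Nontrivial Ω := Fintype.one_lt_card_iff_nontrivial.1 hcard
    exact exists_pair_ne Ω
  have hbπ : ∀ x, π x ≤ b * π' x := fun x => (div_le_iff₀ (hπ'pos x)).1 (hb.2 ⟨x, rfl⟩)
  have hτ : 0 ≤ relaxTime π' L' := by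
    rw [relaxTime, if_pos hne]
    refine one_div_nonneg.2 (Real.sInf_nonneg ?_)
    rintro r ⟨f, hf, rfl⟩
    exact div_nonneg (dirForm_nonneg hgen' hπ'pos f) (varForm_pos hπ'pos hf).le
  refine (relaxTime_le_of_poincare hne hgen hπpos fun f => ?_).2.2
  calc VarForm π f ≤ b ^ 2 * VarForm π' f := varForm_le_of_le_mul hπpos hbπ f
    _ ≤ b ^ 2 * (relaxTime π' L' * DirForm π' L' f) :=
        mul_le_mul_of_nonneg_left (varForm_le_relaxTime_mul hne hgen' herg' hπ'pos f)
          (sq_nonneg b)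
    _ ≤ b ^ 2 * (relaxTime π' L' * (ρmax * DirForm π L f)) := by
        refine mul_le_mul_of_nonneg_left (mul_le_mul_of_nonneg_left ?_ hτ) (sq_nonneg b)
        exact dirForm_le_of_congestion hgen hgen' hπpos hπ'pos hω
          (fun α β h => (hΓ α β h).2) (fun α β h γ hγ => ((hflow α β h).1 γ hγ).1)
          (fun α β h => (hflow α β h).2) (fun σ η h => hρ.2 ⟨σ, η, h, rfl⟩) f
    _ = b ^ 2 * ρmax * relaxTime π' L' * DirForm π L f := by ring
end

section
/- In the general block-dynamics setting, the reduced block dynamics R^μ_𝒱 is reversible with respect to π_proj, the projection onto U of the uniform distribution on Ω^μ_V, defined by π_proj(σ̂) = |{σ ∈ Ω^μ_V : σ|_U = σ̂}| / |Ω^μ_V| for σ̂ ∈ Ω_𝓡. -/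
/-!
Off the diagonal, reversibility is checked block by block. Fix a block `V_i` and boundary colourings
`σ̂, η̂` agreeing on `U ∖ V_i`, with chosen extensions `σ, τ ∈ Ω^μ_V`. The basic tool is gluing: two
proper colourings that agree with `μ` off `V` and with each other on `U ∖ V_i` can be glued, taking
the first on `V_i` and the second elsewhere, because every vertex outside `V_i` adjacent to `V_i`
lies either outside `V` or in `U` (`glueCol_proper`).

Gluing gives `|Ω^σ_{V_i}| = |Ω^τ_{V_i}|` (`card_block_eq`), so the denominators on the two sides of
detailed balance agree. For the numerators, exchanging the `V_i`-parts gives a bijection between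
pairs (extension of `σ̂`, element of `Ω^σ_{V_i}` restricting to `η̂`) and pairs (extension of `η̂`,
element of `Ω^τ_{V_i}` restricting to `σ̂`); see `card_pairs_le`. In both cases it is enough to
show that the gluing map is injective, since the hypotheses are symmetric in `σ` and `τ`.
-/

open Finset
open scoped Classical

section Glauber

variable {I : Type*} [Fintype I] {k : ℕ} {S : Type*} [Fintype S] [DecidableEq S]

/-- Off-diagonal entry of the Glauber dynamics: if the two states differ at exactly one site,
the rate of that site; otherwise `0`. -/
noncomputable def glauberOff (p : I → ℝ) (val : S → I → Fin k) (a b : S) : ℝ :=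
  if (Finset.univ.filter fun w => val a w ≠ val b w).card = 1 then
    ∑ w ∈ Finset.univ.filter fun w => val a w ≠ val b w, p w
  else 0

/-- The Glauber dynamics generator with site rates `p`, on a state space `S` of configurations
(described by `val : S → I → Fin k`): off-diagonal entries are the rate of the unique differing
site, diagonal entries make row sums vanish. -/
noncomputable def glauber (p : I → ℝ) (val : S → I → Fin k) : S → S → ℝ :=
  fun σ η =>
    if σ = η then -∑ η' ∈ Finset.univ.filter fun b => b ≠ σ, glauberOff p val σ η'
    else glauberOff p val σ η

end Glauber

/-- A proper `k`-vertex-colouring of a graph. -/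
def ProperCol {V : Type*} (G : SimpleGraph V) {k : ℕ} (σ : V → Fin k) : Prop :=
  ∀ a b : V, G.Adj a b → σ a ≠ σ b

section BlockDynamics

variable {V : Type} [Fintype V] [DecidableEq V]

/-- `Ω^χ_W`: proper `k`-colourings of `G` agreeing with `χ` off `W`. -/
abbrev OmegaW (G : SimpleGraph V) (k : ℕ) (W : Finset V) (χ : V → Fin k) :=
  {σ : V → Fin k // ProperCol G σ ∧ ∀ w ∉ W, σ w = χ w}

variable (G : SimpleGraph V) (k : ℕ) {r : ℕ}

/-- `g_i`: the minimum over boundary conditions `σ ∈ Ω^μ_V` of the spectral gap of the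
Glauber dynamics on the block `V_i`. -/
noncomputable def blockGapW (p : V → ℝ) (Vfull : Finset V) (μ : V → Fin k)
    (Vi : Fin r → Finset V) (i : Fin r) : ℝ :=
  sInf {x : ℝ | ∃ σ : OmegaW G k Vfull μ,
    x = specGap (unif (OmegaW G k (Vi i) σ.1))
          (glauber p (fun τ : OmegaW G k (Vi i) σ.1 => τ.1))}

/-- Off-diagonal entries of the weighted block dynamics `B^μ_𝒱`:
`g_i · π^σ_{V_i}(η)` when `σ` and `η` agree outside the block `V_i`. -/
noncomputable def blockOff (p : V → ℝ) (Vfull : Finset V) (μ : V → Fin k)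
    (Vi : Fin r → Finset V) (σ η : OmegaW G k Vfull μ) : ℝ :=
  ∑ i : Fin r,
    if ∀ w : V, w ∉ Vi i → σ.1 w = η.1 w then
      blockGapW G k p Vfull μ Vi i / (Fintype.card (OmegaW G k (Vi i) σ.1) : ℝ)
    else 0

/-- The weighted block dynamics `B^μ_𝒱`. -/
noncomputable def blockDyn (p : V → ℝ) (Vfull : Finset V) (μ : V → Fin k)
    (Vi : Fin r → Finset V) : OmegaW G k Vfull μ → OmegaW G k Vfull μ → ℝ := fun σ η =>
  if σ = η then -∑ η' ∈ Finset.univ.filter fun b => b ≠ σ, blockOff G k p Vfull μ Vi σ η'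
  else blockOff G k p Vfull μ Vi σ η

/-- `U`: the vertices of `V` having a neighbour (in the induced subgraph on `V`) lying in a
different block. -/
noncomputable def Ublk (Vfull : Finset V) (Vi : Fin r → Finset V) : Finset V :=
  Vfull.filter fun v => ∃ w ∈ Vfull, G.Adj v w ∧ ∃ i j : Fin r, i ≠ j ∧ v ∈ Vi i ∧ w ∈ Vi j

/-- Restriction of a colouring in `Ω^μ_V` to `U`. -/
noncomputable def resW (Vfull : Finset V) (μ : V → Fin k) (Vi : Fin r → Finset V)
    (σ : OmegaW G k Vfull μ) : {u : V // u ∈ Ublk G Vfull Vi} → Fin k :=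
  fun u => σ.1 u.1

/-- `π^{i,σ̂}_proj(η̂)`: the probability, under the uniform distribution on `Ω^σ_{V_i}` for an
arbitrary extension `σ` of `σ̂`, that the restriction to `U` equals `η̂`. -/
noncomputable def projProbW (p : V → ℝ) (Vfull : Finset V) (μ : V → Fin k)
    (Vi : Fin r → Finset V) (i : Fin r)
    (σh : ↥(Set.range (resW G k Vfull μ Vi)))
    (ηh : {u : V // u ∈ Ublk G Vfull Vi} → Fin k) : ℝ :=
  (Fintype.card {ξ : OmegaW G k (Vi i) (Classical.choose (Set.mem_range.mp σh.2)).1 //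
      ∀ u : {u : V // u ∈ Ublk G Vfull Vi}, ξ.1 u.1 = ηh u} : ℝ) /
  (Fintype.card (OmegaW G k (Vi i) (Classical.choose (Set.mem_range.mp σh.2)).1) : ℝ)

/-- Off-diagonal entries of the reduced block dynamics `R^μ_𝒱`. -/
noncomputable def redOffW (p : V → ℝ) (Vfull : Finset V) (μ : V → Fin k)
    (Vi : Fin r → Finset V)
    (σh ηh : ↥(Set.range (resW G k Vfull μ Vi))) : ℝ :=
  ∑ i : Fin r,
    if ∀ u : {u : V // u ∈ Ublk G Vfull Vi}, u.1 ∉ Vi i → σh.1 u = ηh.1 u then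
      blockGapW G k p Vfull μ Vi i * projProbW G k p Vfull μ Vi i σh ηh.1
    else 0

/-- The reduced block dynamics `R^μ_𝒱` on `Ω_𝓡 = {σ|_U : σ ∈ Ω^μ_V}`. -/
noncomputable def redDynW (p : V → ℝ) (Vfull : Finset V) (μ : V → Fin k)
    (Vi : Fin r → Finset V) :
    ↥(Set.range (resW G k Vfull μ Vi)) → ↥(Set.range (resW G k Vfull μ Vi)) → ℝ :=
  fun σh ηh =>
    if σh = ηh then
      -∑ ηh' ∈ Finset.univ.filter fun b => b ≠ σh, redOffW G k p Vfull μ Vi σh ηh'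
    else redOffW G k p Vfull μ Vi σh ηh

/-- The projection `π_proj` onto `U` of the uniform distribution on `Ω^μ_V`. -/
noncomputable def piProjW (Vfull : Finset V) (μ : V → Fin k) (Vi : Fin r → Finset V)
    (σh : ↥(Set.range (resW G k Vfull μ Vi))) : ℝ :=
  (Fintype.card {σ : OmegaW G k Vfull μ // resW G k Vfull μ Vi σ = σh.1} : ℝ) /
  (Fintype.card (OmegaW G k Vfull μ) : ℝ)

end BlockDynamics

/-- The colouring equal to `f` on `W` and to `g` off `W`. -/
noncomputable def glueCol {V : Type} {k : ℕ} (W : Finset V) (f g : V → Fin k) : V → Fin k :=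
  fun v => if v ∈ W then f v else g v

section Gluing

variable {V : Type} [Fintype V] [DecidableEq V] {G : SimpleGraph V} {k r : ℕ}
  {Vfull : Finset V} {Vi : Fin r → Finset V} {μ : V → Fin k}

theorem glueCol_mem {W : Finset V} {f g : V → Fin k} {v : V} (h : v ∈ W) :
    glueCol W f g v = f v := if_pos h

theorem glueCol_notMem {W : Finset V} {f g : V → Fin k} {v : V} (h : v ∉ W) :
    glueCol W f g v = g v := if_neg h

/-- An edge leaving the block `V_i` inside `V` ends in `U`. -/
theorem mem_Ublk_of_adj (hU : Finset.univ.biUnion Vi = Vfull) {i : Fin r} {a b : V}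
    (hab : G.Adj a b) (ha : a ∈ Vi i) (hb : b ∉ Vi i) (hbV : b ∈ Vfull) :
    b ∈ Ublk G Vfull Vi := by
  have haV : a ∈ Vfull := hU ▸ Finset.mem_biUnion.2 ⟨i, Finset.mem_univ _, ha⟩
  obtain ⟨j, -, hj⟩ := Finset.mem_biUnion.1 (hU.symm ▸ hbV)
  refine Finset.mem_filter.2 ⟨hbV, a, haV, hab.symm, j, i, ?_, hj, ha⟩
  rintro rfl
  exact hb hj

theorem glueCol_proper (hU : Finset.univ.biUnion Vi = Vfull) (i : Fin r) {f g : V → Fin k}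
    (hf : ProperCol G f) (hg : ProperCol G g)
    (hfμ : ∀ w ∉ Vfull, f w = μ w) (hgμ : ∀ w ∉ Vfull, g w = μ w)
    (hfg : ∀ u ∈ Ublk G Vfull Vi, u ∉ Vi i → f u = g u) :
    ProperCol G (glueCol (Vi i) f g) := by
  have key : ∀ a b, G.Adj a b → a ∈ Vi i → b ∉ Vi i → f a ≠ g b := by
    intro a b hab ha hb
    have : f b = g b := by
      by_cases hbV : b ∈ Vfull
      · exact hfg b (mem_Ublk_of_adj hU hab ha hb hbV) hb
      · rw [hfμ b hbV, hgμ b hbV]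
    exact this ▸ hf a b hab
  intro a b hab
  by_cases ha : a ∈ Vi i <;> by_cases hb : b ∈ Vi i
  · rw [glueCol_mem ha, glueCol_mem hb]; exact hf a b hab
  · rw [glueCol_mem ha, glueCol_notMem hb]; exact key a b hab ha hb
  · rw [glueCol_notMem ha, glueCol_mem hb]; exact (key b a hab.symm hb ha).symm
  · rw [glueCol_notMem ha, glueCol_notMem hb]; exact hg a b hab

/-- Elements of `Ω^σ_{V_i}` still agree with `μ` off `V`. -/
theorem block_eq_off (hU : Finset.univ.biUnion Vi = Vfull) {i : Fin r}
    (σ : OmegaW G k Vfull μ) (ξ : OmegaW G k (Vi i) σ.1) : ∀ w ∉ Vfull, ξ.1 w = μ w := by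
  intro w hw
  rw [ξ.2.2 w fun h => hw (hU ▸ Finset.mem_biUnion.2 ⟨i, Finset.mem_univ _, h⟩), σ.2.2 w hw]

theorem card_block_le (hU : Finset.univ.biUnion Vi = Vfull) (i : Fin r)
    (σ τ : OmegaW G k Vfull μ)
    (h : ∀ u ∈ Ublk G Vfull Vi, u ∉ Vi i → σ.1 u = τ.1 u) :
    Fintype.card (OmegaW G k (Vi i) σ.1) ≤ Fintype.card (OmegaW G k (Vi i) τ.1) := by
  refine Fintype.card_le_of_injective
    (fun ξ => ⟨glueCol (Vi i) ξ.1 τ.1, glueCol_proper hU i ξ.2.1 τ.2.1 (block_eq_off hU σ ξ) τ.2.2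
      fun u hu hui => (ξ.2.2 u hui).trans (h u hu hui), fun w hw => glueCol_notMem hw⟩) ?_
  intro ξ ζ hξζ
  ext1
  funext v
  by_cases hv : v ∈ Vi i
  · simpa [glueCol_mem hv] using congrFun (congrArg Subtype.val hξζ) v
  · rw [ξ.2.2 v hv, ζ.2.2 v hv]

theorem card_block_eq (hU : Finset.univ.biUnion Vi = Vfull) (i : Fin r)
    (σ τ : OmegaW G k Vfull μ)
    (h : ∀ u ∈ Ublk G Vfull Vi, u ∉ Vi i → σ.1 u = τ.1 u) :
    Fintype.card (OmegaW G k (Vi i) σ.1) = Fintype.card (OmegaW G k (Vi i) τ.1) :=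
  le_antisymm (card_block_le hU i σ τ h)
    (card_block_le hU i τ σ fun u hu hui => (h u hu hui).symm)

/-- Exchanging the `V_i`-parts: `(α, ξ)` is sent to the pair consisting of `ξ` on `V_i` and `α`
elsewhere, and `α` on `V_i` and `τ` elsewhere. -/
theorem card_pairs_le (hU : Finset.univ.biUnion Vi = Vfull) (i : Fin r)
    (σ τ : OmegaW G k Vfull μ) (s t : {u : V // u ∈ Ublk G Vfull Vi} → Fin k)
    (hτ : resW G k Vfull μ Vi τ = t)
    (h : ∀ u : {u : V // u ∈ Ublk G Vfull Vi}, u.1 ∉ Vi i → s u = t u) :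
    Fintype.card {α : OmegaW G k Vfull μ // resW G k Vfull μ Vi α = s} *
      Fintype.card {ξ : OmegaW G k (Vi i) σ.1 //
        ∀ u : {u : V // u ∈ Ublk G Vfull Vi}, ξ.1 u.1 = t u} ≤
    Fintype.card {β : OmegaW G k Vfull μ // resW G k Vfull μ Vi β = t} *
      Fintype.card {ζ : OmegaW G k (Vi i) τ.1 //
        ∀ u : {u : V // u ∈ Ublk G Vfull Vi}, ζ.1 u.1 = s u} := by
  rw [← Fintype.card_prod, ← Fintype.card_prod]
  have hτ' : ∀ u : {u : V // u ∈ Ublk G Vfull Vi}, τ.1 u.1 = t u := fun u => congrFun hτ u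
  have hα : ∀ (α : {α : OmegaW G k Vfull μ // resW G k Vfull μ Vi α = s})
      (u : {u : V // u ∈ Ublk G Vfull Vi}), α.1.1 u.1 = s u := fun α u => congrFun α.2 u
  refine Fintype.card_le_of_injective (fun x =>
    (⟨⟨glueCol (Vi i) x.2.1.1 x.1.1.1, glueCol_proper hU i x.2.1.2.1 x.1.1.2.1
        (block_eq_off hU σ x.2.1) x.1.1.2.2 ?_, ?_⟩, ?_⟩,
     ⟨⟨glueCol (Vi i) x.1.1.1 τ.1, glueCol_proper hU i x.1.1.2.1 τ.2.1
        x.1.1.2.2 τ.2.2 ?_, fun w hw => glueCol_notMem hw⟩, ?_⟩)) ?_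
  · intro u hu hui
    rw [x.2.2 ⟨u, hu⟩, hα x.1 ⟨u, hu⟩, h ⟨u, hu⟩ hui]
  · intro w hw
    by_cases hv : w ∈ Vi i
    · rw [glueCol_mem hv, block_eq_off hU σ x.2.1 w hw]
    · rw [glueCol_notMem hv, x.1.1.2.2 w hw]
  · funext u
    by_cases hv : u.1 ∈ Vi i
    · exact (glueCol_mem hv).trans (x.2.2 u)
    · exact (glueCol_notMem hv).trans ((hα x.1 u).trans (h u hv))
  · intro u hu hui
    rw [hα x.1 ⟨u, hu⟩, hτ' ⟨u, hu⟩, h ⟨u, hu⟩ hui]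
  · intro u
    by_cases hv : u.1 ∈ Vi i
    · exact (glueCol_mem hv).trans (hα x.1 u)
    · exact (glueCol_notMem hv).trans ((hτ' u).trans (h u hv).symm)
  · rintro ⟨α, ξ⟩ ⟨α', ξ'⟩ hx
    have h1 : glueCol (Vi i) ξ.1.1 α.1.1 = glueCol (Vi i) ξ'.1.1 α'.1.1 :=
      congrArg (fun y => y.1.1.1) hx
    have h2 : glueCol (Vi i) α.1.1 τ.1 = glueCol (Vi i) α'.1.1 τ.1 :=
      congrArg (fun y => y.2.1.1) hx
    refine Prod.ext (Subtype.ext (Subtype.ext (funext fun v => ?_)))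
      (Subtype.ext (Subtype.ext (funext fun v => ?_)))
    · by_cases hv : v ∈ Vi i
      · simpa [glueCol_mem hv] using congrFun h2 v
      · simpa [glueCol_notMem hv] using congrFun h1 v
    · by_cases hv : v ∈ Vi i
      · simpa [glueCol_mem hv] using congrFun h1 v
      · exact (ξ.1.2.2 v hv).trans (ξ'.1.2.2 v hv).symm

/-- Detailed balance for the projected resampling of a single block. -/
theorem piProjW_mul_projProbW (hU : Finset.univ.biUnion Vi = Vfull) (p : V → ℝ) (i : Fin r)
    (x y : ↥(Set.range (resW G k Vfull μ Vi)))
    (h : ∀ u : {u : V // u ∈ Ublk G Vfull Vi}, u.1 ∉ Vi i → x.1 u = y.1 u) :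
    piProjW G k Vfull μ Vi x * projProbW G k p Vfull μ Vi i x y.1 =
      piProjW G k Vfull μ Vi y * projProbW G k p Vfull μ Vi i y x.1 := by
  unfold piProjW projProbW
  have hσ := Classical.choose_spec (Set.mem_range.mp x.2)
  have hτ := Classical.choose_spec (Set.mem_range.mp y.2)
  generalize Classical.choose (Set.mem_range.mp x.2) = σ at hσ ⊢
  generalize Classical.choose (Set.mem_range.mp y.2) = τ at hτ ⊢
  have hN := card_block_eq hU i σ τ fun u hu hui =>
    (congrFun hσ ⟨u, hu⟩).trans ((h ⟨u, hu⟩ hui).trans (congrFun hτ ⟨u, hu⟩).symm)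
  have hP := le_antisymm (card_pairs_le hU i σ τ x.1 y.1 hτ h)
    (card_pairs_le hU i τ σ y.1 x.1 hσ fun u hu => (h u hu).symm)
  rw [hN, div_mul_div_comm, div_mul_div_comm]
  congr 1
  exact_mod_cast hP

end Gluing

/-- the reduced block dynamics `R^μ_𝒱` is reversible with respect to the
projection onto `U` of the uniform distribution on `Ω^μ_V`. -/
theorem reduced_block_dynamics_reversible
    {V : Type} [Fintype V] [DecidableEq V] (G : SimpleGraph V) [DecidableRel G.Adj]
    (k : ℕ) (p : V → ℝ) (hp : ∀ w, 0 < p w)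
    (Vfull : Finset V) {r : ℕ} (Vi : Fin r → Finset V)
    (hpart_disj : ∀ i j : Fin r, i ≠ j → Disjoint (Vi i) (Vi j))
    (hpart_union : Finset.univ.biUnion Vi = Vfull)
    (hpart_ne : ∀ i, (Vi i).Nonempty)
    (μ : V → Fin k) (hμ : ProperCol G μ)
    (hblocks_erg : ∀ (i : Fin r) (σ : OmegaW G k Vfull μ),
      IsErgodicGen (glauber p (fun τ : OmegaW G k (Vi i) σ.1 => τ.1))) :
    IsReversible (redDynW G k p Vfull μ Vi) (piProjW G k Vfull μ Vi) := by
  intro x y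
  by_cases hxy : x = y
  · rw [hxy]
  simp only [redDynW, if_neg hxy, if_neg (Ne.symm hxy), redOffW, Finset.mul_sum]
  refine Finset.sum_congr rfl fun i _ => ?_
  by_cases h : ∀ u : {u : V // u ∈ Ublk G Vfull Vi}, u.1 ∉ Vi i → x.1 u = y.1 u
  · rw [if_pos h, if_pos fun u hu => (h u hu).symm, mul_left_comm,
      piProjW_mul_projProbW hpart_union p i x y h, mul_left_comm]
  · rw [if_neg h, if_neg fun h' => h fun u hu => (h' u hu).symm, mul_zero, mul_zero]
end

section
/- In the tree block setting, assuming (A1) and (A2), fix i ∈ {1,…,r}, an edge e ∈ ∂̄T_i, and σ ∈ Ω^μ_E, and let C = σ(N(e) ∩ ∂T_i) be the set of colours σ assigns to edges outside T_i incident to e. Then: (1) there is a universal constant C₀ > 0 (independent of d, G, T, μ, the partition, i, e and σ) such that if |∂̄T_i| = 2 then for every colour c ∈ {1,…,k}∖C, the proportion π^σ_{E_i}({ξ ∈ Ω^σ_{E_i} : ξ(e) = c}) satisfies |π^σ_{E_i}({ξ : ξ(e) = c}) − 1/2| ≤ C₀/d; and (2) if ∂̄T_i = {e}, then for any two colours c,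 c' ∈ {1,…,k}∖C, the number of ξ ∈ Ω^σ_{E_i} with ξ(e) = c equals the number of ξ ∈ Ω^σ_{E_i} with ξ(e) = c', so each available colour has probability exactly 1/(k−|C|) under π^σ_{E_i}. -/
/-!
Fix a block `E`, a boundary condition, and a boundary edge `e` of `E`. Everything is obtained by
exchanging two colours on part of `E` (`pswap`), which is an injection on colourings, so that only
properness of the result has to be checked (`colCount_le_of_pswap`).

If `e` is the only boundary edge, exchanging two available colours on all of `E` is a bijection
between the colourings giving `e` either colour (`count_le_single`), and the total number of
colourings is the sum over the available colours (`count_total`).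

Suppose there is a second boundary edge `e'`. The fringe and non-incidence conditions force the
exterior edges at `e` to be the `d - 1` other edges at its leaf endpoint, so exactly two colours
`x`, `x'` are available (`card_extColours`). Let `e, g₁, g₂, …` be the path towards `e'`; both `g₁`
and `g₂` separate `e` from `e'` (`exists_two_sides`). Write `N(x)` for the number of colourings with
`ξ e = x`. If `ξ g₁ ≠ x'`, exchanging `x` and `x'` on the near side of `g₁` is allowed and does not
touch `e'`, so `N(x) - N(x, ξ g₁ = x') ≤ N(x')`. For each of the `d - 1` colours `z ≠ x, x'`,
exchanging `x'` and `z` on the near side of `g₂` yields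
`N(x, ξ g₁ = x') - N(x, ξ g₁ = x', ξ g₂ = z) ≤ N(x, ξ g₁ = z)`; summing over `z` gives
`(d - 1) N(x, ξ g₁ = x') ≤ N(x)`. Hence `(d - 2) N(x) ≤ (d - 1) N(x')` (`count_compare`), and by
symmetry each of the two colours has probability within `1/d` of `1/2`.
-/

open Finset
open scoped Classical

section Trees

variable {V : Type} [Fintype V] [DecidableEq V]

/-- Two edges are incident if they are distinct and share an endpoint. -/
def EdgeInc (e f : Sym2 V) : Prop := e ≠ f ∧ ∃ v : V, v ∈ e ∧ v ∈ f

/-- A proper `k`-edge-colouring of `G` (total map on `Sym2 V`, constrained on edges). -/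
def ProperECol (G : SimpleGraph V) {k : ℕ} (σ : Sym2 V → Fin k) : Prop :=
  ∀ e ∈ G.edgeSet, ∀ f ∈ G.edgeSet, EdgeInc e f → σ e ≠ σ f

/-- `Ω^χ_{E'}`: proper edge-colourings of `G` agreeing with `χ` off `E'`. -/
abbrev OmegaE (G : SimpleGraph V) (k : ℕ) (E' : Finset (Sym2 V)) (χ : Sym2 V → Fin k) :=
  {σ : Sym2 V → Fin k // ProperECol G σ ∧ ∀ e ∉ E', σ e = χ e}

/-- The Glauber dynamics `𝓛^χ_{E'}` for `k`-edge-colourings: each edge is updated at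
rate `1/k`. -/
noncomputable def treeGen (G : SimpleGraph V) (k : ℕ) (E' : Finset (Sym2 V))
    (χ : Sym2 V → Fin k) : OmegaE G k E' χ → OmegaE G k E' χ → ℝ :=
  glauber (fun _ : Sym2 V => 1 / (k : ℝ)) (fun σ => σ.1)

variable (G : SimpleGraph V) [DecidableRel G.Adj]

/-- The exterior boundary `∂T` of the subtree with edge set `ET`. -/
noncomputable def extBd (ET : Finset (Sym2 V)) : Finset (Sym2 V) :=
  (G.edgeFinset \ ET).filter fun e => ∃ f ∈ ET, EdgeInc e f

/-- The interior boundary `∂̄T` of the subtree with edge set `ET`. -/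
noncomputable def intBd (ET : Finset (Sym2 V)) : Finset (Sym2 V) :=
  ET.filter fun e => ∃ f ∈ extBd G ET, EdgeInc e f

/-- Degree of a vertex in the subtree with edge set `ET`. -/
noncomputable def degT (ET : Finset (Sym2 V)) (v : V) : ℕ :=
  (ET.filter fun e => v ∈ e).card

/-- An edge set is connected (spans a subtree, inside a forest) if any two of its edges are
linked by a chain of pairwise incident edges within the set. -/
def EdgeConnectedSet (ET : Finset (Sym2 V)) : Prop :=
  ∀ e ∈ ET, ∀ f ∈ ET,
    Relation.ReflTransGen (fun a b => a ∈ ET ∧ b ∈ ET ∧ EdgeInc a b) e f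

/-- A splitting subtree (given by its nonempty connected edge set `ET`): either a single
edge, or a subtree with fringe interior boundary of size at most 2 whose two interior
boundary edges (if there are two) are non-incident. -/
def IsSplitting (ET : Finset (Sym2 V)) : Prop :=
  ET ⊆ G.edgeFinset ∧ ET.Nonempty ∧ EdgeConnectedSet ET ∧
  (ET.card = 1 ∨
    ((∀ e ∈ intBd G ET, ∃ v : V, v ∈ e ∧ degT ET v = 1) ∧
     (intBd G ET).card ≤ 2 ∧
     ∀ e ∈ intBd G ET, ∀ f ∈ intBd G ET, e ≠ f → ¬ EdgeInc e f))

end Trees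

section TreeBlocks

variable {V : Type} [Fintype V] [DecidableEq V] (G : SimpleGraph V) [DecidableRel G.Adj]

/-- The block of edges hanging from the edge `e0`, relative to a set `R` of root vertices:
the edges of `ET` reachable from `e0` by chains of incident edges meeting at vertices
outside `R`. -/
noncomputable def hangBlock (ET : Finset (Sym2 V)) (R : Finset V) (e0 : Sym2 V) :
    Finset (Sym2 V) :=
  ET.filter fun f => Relation.ReflTransGen
    (fun a b => a ∈ ET ∧ b ∈ ET ∧ EdgeInc a b ∧ ∃ v : V, v ∈ a ∧ v ∈ b ∧ v ∉ R) e0 f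

/-- Vertex-rooted block partition: `T` is rooted at an internal vertex `r0` of `T`, the
distinguished edges `roots i` are exactly the edges of `T` at `r0`, and each block is the
subtree of `T` hanging from its distinguished edge. -/
def IsVertexRooted (ET : Finset (Sym2 V)) {r : ℕ}
    (blocks : Fin r → Finset (Sym2 V)) (roots : Fin r → Sym2 V) : Prop :=
  ∃ r0 : V, 2 ≤ degT ET r0 ∧ Function.Injective roots ∧
    (∀ i, roots i ∈ ET ∧ r0 ∈ roots i) ∧
    (∀ f ∈ ET, r0 ∈ f → ∃ i, roots i = f) ∧
    (∀ i, blocks i = hangBlock ET {r0} (roots i))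

/-- Edge-rooted block partition: `T` is rooted at an edge `e` of `T`, not in the interior
boundary, with both endpoints internal to `T`; the blocks are `{e}` together with the
subtrees hanging from each edge of `T` incident to `e`. -/
def IsEdgeRooted (ET : Finset (Sym2 V)) {r : ℕ}
    (blocks : Fin r → Finset (Sym2 V)) (roots : Fin r → Sym2 V) : Prop :=
  ∃ e : Sym2 V, e ∈ ET ∧ e ∉ intBd G ET ∧ (∀ v ∈ e, 2 ≤ degT ET v) ∧
    Function.Injective roots ∧
    (∃ i0, roots i0 = e ∧ blocks i0 = {e}) ∧
    (∀ i, roots i = e ∨ (roots i ∈ ET ∧ roots i ≠ e ∧ EdgeInc e (roots i) ∧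
      blocks i = hangBlock (ET.erase e) (Finset.univ.filter fun v => v ∈ e) (roots i))) ∧
    (∀ f ∈ ET, f ≠ e → EdgeInc e f → ∃ i, roots i = f)

/-- The tree block setting: a vertex-rooted or edge-rooted block partition. -/
def TreeBlockSetting (ET : Finset (Sym2 V)) {r : ℕ}
    (blocks : Fin r → Finset (Sym2 V)) (roots : Fin r → Sym2 V) : Prop :=
  IsVertexRooted ET blocks roots ∨ IsEdgeRooted G ET blocks roots

/-- `g_i`: the minimum over boundary conditions `σ ∈ Ω^μ_E` of the spectral gap of the
Glauber dynamics on the block `E_i`. -/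
noncomputable def blockGapE (d : ℕ) (ET : Finset (Sym2 V)) (μ : Sym2 V → Fin (d + 1))
    {r : ℕ} (blocks : Fin r → Finset (Sym2 V)) (i : Fin r) : ℝ :=
  sInf {x : ℝ | ∃ σ : OmegaE G (d + 1) ET μ,
    x = specGap (unif (OmegaE G (d + 1) (blocks i) σ.1)) (treeGen G (d + 1) (blocks i) σ.1)}

/-- `τ_i`: the maximum over boundary conditions `σ ∈ Ω^μ_E` of the relaxation time of the
Glauber dynamics on the block `E_i`. -/
noncomputable def blockTauE (d : ℕ) (ET : Finset (Sym2 V)) (μ : Sym2 V → Fin (d + 1))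
    {r : ℕ} (blocks : Fin r → Finset (Sym2 V)) (i : Fin r) : ℝ :=
  sSup {x : ℝ | ∃ σ : OmegaE G (d + 1) ET μ,
    x = relaxTime (unif (OmegaE G (d + 1) (blocks i) σ.1)) (treeGen G (d + 1) (blocks i) σ.1)}

/-- Restriction of a colouring in `Ω^μ_E` to `F = {e_1, …, e_r}` (the distinguished edges). -/
noncomputable def resE (d : ℕ) (ET : Finset (Sym2 V)) (μ : Sym2 V → Fin (d + 1))
    {r : ℕ} (roots : Fin r → Sym2 V) (σ : OmegaE G (d + 1) ET μ) : Fin r → Fin (d + 1) :=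
  fun i => σ.1 (roots i)

/-- The projection `π_𝓡` onto `F` of the uniform distribution on `Ω^μ_E`. -/
noncomputable def piRE (d : ℕ) (ET : Finset (Sym2 V)) (μ : Sym2 V → Fin (d + 1))
    {r : ℕ} (roots : Fin r → Sym2 V)
    (σh : ↥(Set.range (resE G d ET μ roots))) : ℝ :=
  (Fintype.card {σ : OmegaE G (d + 1) ET μ // resE G d ET μ roots σ = σh.1} : ℝ) /
  (Fintype.card (OmegaE G (d + 1) ET μ) : ℝ)

/-- `π^{i,σ̂}_proj(η̂)`: for an arbitrary extension `σ` of `σ̂`, the probability under the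
uniform distribution on `Ω^σ_{E_i}` that the restriction to `F` equals `η̂`. -/
noncomputable def projE (d : ℕ) (ET : Finset (Sym2 V)) (μ : Sym2 V → Fin (d + 1))
    {r : ℕ} (blocks : Fin r → Finset (Sym2 V)) (roots : Fin r → Sym2 V) (i : Fin r)
    (σh : ↥(Set.range (resE G d ET μ roots))) (ηh : Fin r → Fin (d + 1)) : ℝ :=
  (Fintype.card {ξ : OmegaE G (d + 1) (blocks i)
      (Classical.choose (Set.mem_range.mp σh.2)).1 //
      ∀ j : Fin r, ξ.1 (roots j) = ηh j} : ℝ) /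
  (Fintype.card (OmegaE G (d + 1) (blocks i)
      (Classical.choose (Set.mem_range.mp σh.2)).1) : ℝ)

/-- Off-diagonal entries of the reduced block dynamics `𝓡^μ_𝓔`. -/
noncomputable def redOffE (d : ℕ) (ET : Finset (Sym2 V)) (μ : Sym2 V → Fin (d + 1))
    {r : ℕ} (blocks : Fin r → Finset (Sym2 V)) (roots : Fin r → Sym2 V)
    (σh ηh : ↥(Set.range (resE G d ET μ roots))) : ℝ :=
  ∑ i : Fin r,
    if ∀ j : Fin r, j ≠ i → σh.1 j = ηh.1 j then
      blockGapE G d ET μ blocks i * projE G d ET μ blocks roots i σh ηh.1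
    else 0

/-- The reduced block dynamics `𝓡^μ_𝓔` on `Ω_𝓡 = {σ|_F : σ ∈ Ω^μ_E}`. -/
noncomputable def redDynE (d : ℕ) (ET : Finset (Sym2 V)) (μ : Sym2 V → Fin (d + 1))
    {r : ℕ} (blocks : Fin r → Finset (Sym2 V)) (roots : Fin r → Sym2 V) :
    ↥(Set.range (resE G d ET μ roots)) → ↥(Set.range (resE G d ET μ roots)) → ℝ :=
  fun σh ηh =>
    if σh = ηh then
      -∑ ηh' ∈ Finset.univ.filter fun b => b ≠ σh, redOffE G d ET μ blocks roots σh ηh'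
    else redOffE G d ET μ blocks roots σh ηh

end TreeBlocks

/-! ### Exchanging colours and counting -/

section ColourCounting

set_option linter.unusedSectionVars false

variable {V : Type} [Fintype V] [DecidableEq V] {G : SimpleGraph V} [DecidableRel G.Adj]

lemma EdgeInc.symm {e f : Sym2 V} (h : EdgeInc e f) : EdgeInc f e :=
  ⟨h.1.symm, h.2.imp fun _ hv => ⟨hv.2, hv.1⟩⟩

/-- Exchange the colours `a` and `b` on the edges of `S`, leaving all other edges alone. -/
def pswap {k : ℕ} (S : Finset (Sym2 V)) (a b : Fin k) (ξ : Sym2 V → Fin k) : Sym2 V → Fin k :=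
  fun f => if f ∈ S then Equiv.swap a b (ξ f) else ξ f

lemma pswap_pswap {k : ℕ} (S : Finset (Sym2 V)) (a b : Fin k) (ξ : Sym2 V → Fin k) :
    pswap S a b (pswap S a b ξ) = ξ := by
  funext f
  by_cases h : f ∈ S <;> simp [pswap, h]

lemma pswap_proper {k : ℕ} {S : Finset (Sym2 V)} {a b : Fin k} {ξ : Sym2 V → Fin k}
    (hξ : ProperECol G ξ)
    (hb : ∀ f ∈ S, f ∈ G.edgeSet → ∀ h ∈ G.edgeSet, h ∉ S → EdgeInc f h →
      Equiv.swap a b (ξ f) ≠ ξ h) :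
    ProperECol G (pswap S a b ξ) := by
  intro f hf h hh hi
  by_cases h1 : f ∈ S <;> by_cases h2 : h ∈ S <;> simp only [pswap, h1, h2, if_true, if_false]
  · exact fun hc => hξ f hf h hh hi ((Equiv.swap a b).injective hc)
  · exact hb f h1 hf h hh h2 hi
  · exact fun hc => hb h h2 hh f hf h1 hi.symm hc.symm
  · exact hξ f hf h hh hi

/-- The number of colourings in `Ω^χ_E` with property `P`. -/
noncomputable def colCount (G : SimpleGraph V) {k : ℕ} (E : Finset (Sym2 V)) (χ : Sym2 V → Fin k)
    (P : (Sym2 V → Fin k) → Prop) : ℕ :=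
  (Finset.univ.filter fun ξ : Sym2 V → Fin k =>
    (ProperECol G ξ ∧ ∀ e ∉ E, ξ e = χ e) ∧ P ξ).card

/-- Exchanging two colours on `S ⊆ E` is injective, so if it maps the colourings with property
`P` to proper colourings with property `Q`, then the former are at most as many. -/
lemma colCount_le_of_pswap {k : ℕ} {E S : Finset (Sym2 V)} {χ : Sym2 V → Fin k}
    {P Q : (Sym2 V → Fin k) → Prop} (a b : Fin k) (hS : S ⊆ E)
    (hb : ∀ ξ, ProperECol G ξ → (∀ e ∉ E, ξ e = χ e) → P ξ →
      (∀ f ∈ S, f ∈ G.edgeSet → ∀ h ∈ G.edgeSet, h ∉ S → EdgeInc f h →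
        Equiv.swap a b (ξ f) ≠ ξ h) ∧ Q (pswap S a b ξ)) :
    colCount G E χ P ≤ colCount G E χ Q := by
  unfold colCount
  refine Finset.card_le_card_of_injOn (pswap S a b) ?_ ?_
  · intro ξ hξ
    simp only [Finset.coe_filter, Finset.mem_univ, true_and, Set.mem_ofPred_eq] at hξ ⊢
    obtain ⟨⟨h1, h2⟩, h3⟩ := hξ
    obtain ⟨h4, h5⟩ := hb ξ h1 h2 h3
    refine ⟨⟨pswap_proper h1 h4, fun e he => ?_⟩, h5⟩
    have : e ∉ S := fun h => he (hS h)
    simp [pswap, this, h2 e he]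
  · intro ξ _ η _ h
    rw [← pswap_pswap S a b ξ, h, pswap_pswap]

lemma colCount_split {k : ℕ} (E : Finset (Sym2 V)) (χ : Sym2 V → Fin k)
    (P R : (Sym2 V → Fin k) → Prop) :
    colCount G E χ P = colCount G E χ (fun ξ => P ξ ∧ R ξ) +
      colCount G E χ (fun ξ => P ξ ∧ ¬ R ξ) := by
  unfold colCount
  rw [← Finset.card_filter_add_card_filter_not (s := Finset.univ.filter _) R]
  congr 2 <;> · rw [Finset.filter_filter]; simp only [and_assoc]

lemma colCount_sum {k : ℕ} (E : Finset (Sym2 V)) (χ : Sym2 V → Fin k)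
    (P : (Sym2 V → Fin k) → Prop) (g : Sym2 V) :
    colCount G E χ P = ∑ z, colCount G E χ (fun ξ => P ξ ∧ ξ g = z) := by
  unfold colCount
  rw [Finset.card_eq_sum_card_fiberwise (t := Finset.univ) (f := fun ξ => ξ g) (by simp)]
  refine Finset.sum_congr rfl fun z _ => ?_
  rw [Finset.filter_filter]; simp only [and_assoc]

/-- `S` is a set of edges of `E` containing `e` but not `e'`, which touches the rest of `E` only
along `g`: the near side of an edge `g` separating `e` from `e'`. -/
structure IsSide (E : Finset (Sym2 V)) (e e' g : Sym2 V) (S : Finset (Sym2 V)) : Prop where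
  sub : S ⊆ E
  mem : e ∈ S
  not_mem : e' ∉ S
  sep : ∀ f ∈ S, ∀ h ∈ E, h ∉ S → EdgeInc f h → h = g

/-- The colours blocked for `e`: those that `χ` gives to exterior edges of `E` incident to `e`. -/
noncomputable def extColours (G : SimpleGraph V) [DecidableRel G.Adj] {k : ℕ}
    (E : Finset (Sym2 V)) (χ : Sym2 V → Fin k) (e : Sym2 V) : Finset (Fin k) :=
  ((extBd G E).filter fun f => EdgeInc f e).image χ

/-- Exchanging colours on a side `S` keeps a colouring proper, provided the separating edge `g`
carries neither colour and the new colour of `e` is available. -/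
lemma swap_ne_of_side {k : ℕ} {E S : Finset (Sym2 V)} {χ ξ : Sym2 V → Fin k} {e e' g : Sym2 V}
    (hbd : ∀ f ∈ intBd G E, f = e ∨ f = e') (hS : IsSide E e e' g S)
    (hχ : ∀ e ∉ E, ξ e = χ e) {a b : Fin k} (hξ : ProperECol G ξ)
    (hav : Equiv.swap a b (ξ e) ∉ extColours G E χ e) (hga : ξ g ≠ a) (hgb : ξ g ≠ b) :
    ∀ f ∈ S, f ∈ G.edgeSet → ∀ h ∈ G.edgeSet, h ∉ S → EdgeInc f h →
        Equiv.swap a b (ξ f) ≠ ξ h := by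
  intro f hf hfG h hh hhS hi
  by_cases hE : h ∈ E
  · obtain rfl := hS.sep f hf h hE hhS hi
    intro hc
    apply hξ f hfG h hh hi
    rw [← Equiv.swap_apply_of_ne_of_ne hga hgb] at hc
    exact (Equiv.swap a b).injective hc
  · have hex : h ∈ extBd G E := by
      simp only [extBd, Finset.mem_filter, Finset.mem_sdiff, SimpleGraph.mem_edgeFinset]
      exact ⟨⟨hh, hE⟩, f, hS.sub hf, hi.symm⟩
    have : f ∈ intBd G E := Finset.mem_filter.2 ⟨hS.sub hf, h, hex, hi⟩
    rcases hbd f this with rfl | rfl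
    · intro hc
      apply hav
      rw [hc, hχ h hE]
      exact Finset.mem_image_of_mem _ (Finset.mem_filter.2 ⟨hex, hi.symm⟩)
    · exact absurd hf hS.not_mem

lemma colour_not_mem_ext {k : ℕ} {E : Finset (Sym2 V)} {χ ξ : Sym2 V → Fin k} {e : Sym2 V}
    (hχ : ∀ e ∉ E, ξ e = χ e) (hξ : ProperECol G ξ) (heG : e ∈ G.edgeSet) :
    ξ e ∉ extColours G E χ e := by
  intro hc
  obtain ⟨f, hf, hfe⟩ := Finset.mem_image.1 hc
  simp only [extBd, Finset.mem_filter, Finset.mem_sdiff, SimpleGraph.mem_edgeFinset] at hf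
  rw [← hχ f hf.1.1.2] at hfe
  exact hξ f hf.1.1.1 e heG hf.2 hfe

/-- The comparison of two available colours `x`, `x'` of the boundary edge `e`. Colourings in
which `g₁` avoids `x'` inject by exchanging `x`, `x'` on the near side of `g₁`; those in which
`g₁` has colour `x'` form a fraction at most `1/(d-1)`, because for each of the `d - 1` colours
`z ≠ x, x'` exchanging `x'` and `z` on the near side of `g₂` moves all but those with
`ξ g₂ = z` to colourings with `ξ g₁ = z`. -/
lemma count_compare {d : ℕ} (hd : 3 ≤ d) {E S₁ S₂ : Finset (Sym2 V)}
    {χ : Sym2 V → Fin (d + 1)} {e e' g₁ g₂ : Sym2 V}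
    (hbd : ∀ f ∈ intBd G E, f = e ∨ f = e') (hEG : E ⊆ G.edgeFinset)
    (hg₁E : g₁ ∈ E) (hg₂E : g₂ ∈ E) (he1 : EdgeInc e g₁) (h12 : EdgeInc g₁ g₂)
    (hS₁ : IsSide E e e' g₁ S₁) (hS₂ : IsSide E e e' g₂ S₂) (hg₁S₂ : g₁ ∈ S₂)
    {x x' : Fin (d + 1)} (hxx : x ≠ x') (hx' : x' ∉ extColours G E χ e) :
    (d - 2) * colCount G E χ (fun ξ => ξ e = x) ≤
      (d - 1) * colCount G E χ (fun ξ => ξ e = x') := by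
  have hE : ∀ f ∈ E, f ∈ G.edgeSet := fun f hf => SimpleGraph.mem_edgeFinset.1 (hEG hf)
  have heG := hE e (hS₁.sub hS₁.mem)
  have good : colCount G E χ (fun ξ => ξ e = x ∧ ¬ ξ g₁ = x') ≤
      colCount G E χ (fun ξ => ξ e = x') := by
    refine colCount_le_of_pswap x x' hS₁.sub fun ξ hξ hχ hP => ⟨?_, ?_⟩
    · refine swap_ne_of_side hbd hS₁ hχ hξ ?_ ?_ hP.2
      · rw [hP.1, Equiv.swap_apply_left]; exact hx'
      · rw [← hP.1]; exact (hξ e heG g₁ (hE _ hg₁E) he1).symm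
    · simp [pswap, hS₁.mem, hP.1]
  set F := colCount G E χ (fun ξ => ξ e = x ∧ ξ g₁ = x') with hF
  have step : ∀ z : Fin (d + 1), z ≠ x → z ≠ x' →
      F ≤ colCount G E χ (fun ξ => (ξ e = x ∧ ξ g₁ = x') ∧ ξ g₂ = z) +
        colCount G E χ (fun ξ => ξ e = x ∧ ξ g₁ = z) := by
    intro z hzx hzx'
    rw [hF, colCount_split E χ _ (fun ξ => ξ g₂ = z)]
    refine Nat.add_le_add_left ?_ _
    refine colCount_le_of_pswap x' z hS₂.sub fun ξ hξ hχ hP => ⟨?_, ?_⟩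
    · refine swap_ne_of_side hbd hS₂ hχ hξ ?_ ?_ hP.2
      · rw [hP.1.1, Equiv.swap_apply_of_ne_of_ne hxx hzx.symm, ← hP.1.1]
        exact colour_not_mem_ext hχ hξ heG
      · rw [← hP.1.2]; exact (hξ g₁ (hE _ hg₁E) g₂ (hE _ hg₂E) h12).symm
    · simp [pswap, hS₂.mem, hg₁S₂, hP.1.1, hP.1.2,
        Equiv.swap_apply_of_ne_of_ne hxx hzx.symm]
  have hsplit := colCount_split (G := G) E χ (fun ξ => ξ e = x) (fun ξ => ξ g₁ = x')
  rw [← hF] at hsplit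
  -- the `d - 1` colours other than `x` and `x'`
  set Z : Finset (Fin (d + 1)) := (Finset.univ.erase x).erase x' with hZ
  have hZc : Z.card = d - 1 := by
    rw [hZ, Finset.card_erase_of_mem (by simp [hxx.symm]), Finset.card_erase_of_mem (by simp)]
    simp
  have h1 : (d - 1) * F ≤ F + ∑ z ∈ Z, colCount G E χ (fun ξ => ξ e = x ∧ ξ g₁ = z) := by
    calc (d - 1) * F = ∑ z ∈ Z, F := by rw [Finset.sum_const, hZc, smul_eq_mul]
      _ ≤ ∑ z ∈ Z, (colCount G E χ (fun ξ => (ξ e = x ∧ ξ g₁ = x') ∧ ξ g₂ = z) +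
        colCount G E χ (fun ξ => ξ e = x ∧ ξ g₁ = z)) := by
          refine Finset.sum_le_sum fun z hz => ?_
          simp only [hZ, Finset.mem_erase, Finset.mem_univ, and_true] at hz
          exact step z hz.2 hz.1
      _ ≤ _ := by
          rw [Finset.sum_add_distrib]
          refine Nat.add_le_add_right ?_ _
          rw [hF, colCount_sum E χ (fun ξ => ξ e = x ∧ ξ g₁ = x') g₂]
          exact Finset.sum_le_sum_of_subset (Finset.subset_univ _)
  have h2 : F + ∑ z ∈ Z, colCount G E χ (fun ξ => ξ e = x ∧ ξ g₁ = z) ≤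
      colCount G E χ (fun ξ => ξ e = x) := by
    rw [colCount_sum E χ (fun ξ => ξ e = x) g₁,
      ← Finset.add_sum_erase _ _ (Finset.mem_univ x')]
    refine Nat.add_le_add_left (Finset.sum_le_sum_of_subset ?_) _
    rw [hZ]
    exact Finset.erase_subset_erase _ (Finset.subset_univ _)
  obtain ⟨n, rfl⟩ := Nat.exists_eq_add_of_le hd
  have e1 : 3 + n - 1 = n + 2 := by omega
  have e2 : 3 + n - 2 = n + 1 := by omega
  rw [e1] at h1 ⊢
  rw [e2]
  nlinarith

/-- With a single boundary edge `e`, exchanging `x` with an available colour `x'` on all of `E`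
injects the colourings with `ξ e = x` into those with `ξ e = x'`. -/
lemma count_le_single {k : ℕ} {E : Finset (Sym2 V)} {χ : Sym2 V → Fin k} {e : Sym2 V}
    (hbd : intBd G E = {e}) {x x' : Fin k} (hx' : x' ∉ extColours G E χ e) :
    colCount G E χ (fun ξ => ξ e = x) ≤ colCount G E χ (fun ξ => ξ e = x') := by
  have heE : e ∈ E := by
    have : e ∈ intBd G E := by simp [hbd]
    exact (Finset.mem_filter.1 this).1
  refine colCount_le_of_pswap x x' subset_rfl fun ξ hξ hχ hP => ⟨?_, ?_⟩
  · intro f hf _ h hh hhE hi hc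
    have hex : h ∈ extBd G E := by
      simp only [extBd, Finset.mem_filter, Finset.mem_sdiff, SimpleGraph.mem_edgeFinset]
      exact ⟨⟨hh, hhE⟩, f, hf, hi.symm⟩
    have : f ∈ intBd G E := Finset.mem_filter.2 ⟨hf, h, hex, hi⟩
    rw [hbd, Finset.mem_singleton] at this
    subst this
    rw [hP, Equiv.swap_apply_left, hχ h hhE] at hc
    apply hx'
    rw [hc]
    exact Finset.mem_image_of_mem _ (Finset.mem_filter.2 ⟨hex, hi.symm⟩)
  · simp [pswap, heE, hP]

/-- The edge `e` only takes available colours, so the total is the sum over those. -/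
lemma count_total {k : ℕ} {E : Finset (Sym2 V)} {χ : Sym2 V → Fin k} {e : Sym2 V}
    (heG : e ∈ G.edgeSet) :
    colCount G E χ (fun _ => True) =
      ∑ z ∈ (extColours G E χ e)ᶜ, colCount G E χ (fun ξ => ξ e = z) := by
  rw [colCount_sum E χ _ e]
  simp only [true_and]
  symm
  refine Finset.sum_subset (Finset.subset_univ _) fun z _ hz => ?_
  simp only [Finset.mem_compl, not_not] at hz
  unfold colCount
  refine Finset.card_eq_zero.2 (Finset.eq_empty_of_forall_notMem fun ξ hξ => ?_)
  simp only [Finset.mem_filter, Finset.mem_univ, true_and] at hξ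
  obtain ⟨⟨h1, h2⟩, h3⟩ := hξ
  exact colour_not_mem_ext h2 h1 heG (h3 ▸ hz)

lemma colCount_pos {k : ℕ} {E : Finset (Sym2 V)} {χ : Sym2 V → Fin k} (h : ProperECol G χ) :
    0 < colCount G E χ (fun _ => True) := by
  unfold colCount
  exact Finset.card_pos.2 ⟨χ, by simp [h]⟩

lemma card_omega {k : ℕ} (E : Finset (Sym2 V)) (χ : Sym2 V → Fin k) :
    Fintype.card (OmegaE G k E χ) = colCount G E χ (fun _ => True) := by
  rw [Fintype.card_subtype]; simp [colCount]

lemma card_omega_colour {k : ℕ} (E : Finset (Sym2 V)) (χ : Sym2 V → Fin k) (e : Sym2 V)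
    (c : Fin k) :
    Fintype.card {ξ : OmegaE G k E χ // ξ.1 e = c} = colCount G E χ (fun ξ => ξ e = c) := by
  rw [Fintype.card_congr (Equiv.subtypeSubtypeEquivSubtypeInter
    (fun σ : Sym2 V → Fin k => ProperECol G σ ∧ ∀ e ∉ E, σ e = χ e) (fun ξ => ξ e = c)),
    Fintype.card_subtype]
  unfold colCount
  congr

end ColourCounting

/-! ### Separating edges and blocked colours in the tree -/

section TreeStructure

set_option linter.unusedSectionVars false

variable {V : Type} [Fintype V] [DecidableEq V] {G : SimpleGraph V} [DecidableRel G.Adj]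

lemma reachable_of_mem {F : Finset (Sym2 V)} {b : Sym2 V} (hb : b ∈ F) {u y : V}
    (hu : u ∈ b) (hy : y ∈ b) :
    (SimpleGraph.fromEdgeSet (F : Set (Sym2 V))).Reachable u y := by
  by_cases h : u = y
  · subst h; exact .refl _
  · have : b = s(u, y) := (Sym2.mem_and_mem_iff h).1 ⟨hu, hy⟩
    refine SimpleGraph.Adj.reachable ?_
    rw [SimpleGraph.fromEdgeSet_adj]
    exact ⟨by rw [← this]; exact hb, h⟩

lemma reachable_of_chain {F : Finset (Sym2 V)} {e f : Sym2 V} (he : e ∈ F) {v : V} (hv : v ∈ e)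
    (h : Relation.ReflTransGen (fun a b => a ∈ F ∧ b ∈ F ∧ EdgeInc a b) e f) :
    ∀ y ∈ f, (SimpleGraph.fromEdgeSet (F : Set (Sym2 V))).Reachable v y := by
  induction h with
  | refl => exact fun y hy => reachable_of_mem he hv hy
  | tail _ hab ih =>
    intro y hy
    obtain ⟨-, hb, -, u, hua, hub⟩ := hab
    exact (ih u hua).trans (reachable_of_mem hb hub hy)

lemma fromEdgeSet_le {F : Finset (Sym2 V)} (hF : F ⊆ G.edgeFinset) :
    SimpleGraph.fromEdgeSet (F : Set (Sym2 V)) ≤ G := by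
  intro a b h
  rw [SimpleGraph.fromEdgeSet_adj] at h
  exact SimpleGraph.mem_edgeFinset.1 (hF h.1)

/-- An edge `g` of the path in `E` from an endpoint of `e` to an endpoint of `e'` separates the
two edges in the tree; its near side consists of the edges chained to `e` without using `g`. -/
lemma exists_side (hG : G.IsAcyclic) {E : Finset (Sym2 V)} (hEG : E ⊆ G.edgeFinset)
    {e e' g : Sym2 V} (he : e ∈ E) (hge : e ≠ g) {v v' : V} (hv : v ∈ e)
    (hv' : v' ∈ e') (p : (SimpleGraph.fromEdgeSet (E : Set (Sym2 V))).Walk v v')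
    (hp : p.IsPath) (hg : g ∈ p.edges) :
    ∃ S, IsSide E e e' g S ∧ ∀ f ∈ E, f ≠ g → EdgeInc e f → f ∈ S := by
  have heF : e ∈ E.erase g := Finset.mem_erase.2 ⟨hge, he⟩
  refine ⟨E.filter fun f => Relation.ReflTransGen
    (fun a b => a ∈ E.erase g ∧ b ∈ E.erase g ∧ EdgeInc a b) e f,
    ⟨Finset.filter_subset _ _, Finset.mem_filter.2 ⟨he, .refl⟩, ?_, ?_⟩, ?_⟩
  · intro h
    obtain ⟨q, hq⟩ := (reachable_of_chain heF hv (Finset.mem_filter.1 h).2 v' hv').exists_isPath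
    have l1 := fromEdgeSet_le hEG
    have l2 := fromEdgeSet_le ((Finset.erase_subset g E).trans hEG)
    have hu := (hG.subsingleton_path v v').elim ⟨p.mapLe l1, hp.mapLe l1⟩ ⟨q.mapLe l2, hq.mapLe l2⟩
    have hu' : (p.mapLe l1).edges = (q.mapLe l2).edges := by rw [Subtype.mk.inj hu]
    rw [SimpleGraph.Walk.edges_mapLe_eq_edges, SimpleGraph.Walk.edges_mapLe_eq_edges] at hu'
    have hgq := q.edges_subset_edgeSet (hu' ▸ hg)
    rw [SimpleGraph.edgeSet_fromEdgeSet] at hgq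
    exact Finset.notMem_erase g E (by exact_mod_cast hgq.1)
  · intro f hf h hh hhS hi
    by_contra hne
    obtain ⟨hfE, hf⟩ := Finset.mem_filter.1 hf
    have hfF : f ∈ E.erase g := by
      rcases Relation.ReflTransGen.cases_tail hf with rfl | ⟨c, -, hc⟩
      · exact heF
      · exact hc.2.1
    exact hhS (Finset.mem_filter.2 ⟨hh, hf.tail ⟨hfF, Finset.mem_erase.2 ⟨hne, hh⟩, hi⟩⟩)
  · intro f hf hfg hi
    exact Finset.mem_filter.2 ⟨hf, .single ⟨heF, Finset.mem_erase.2 ⟨hfg, hf⟩, hi⟩⟩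

lemma eq_of_degT_one {E : Finset (Sym2 V)} {v : V} (h : degT E v = 1) {e f : Sym2 V}
    (he : e ∈ E) (hve : v ∈ e) (hf : f ∈ E) (hvf : v ∈ f) : e = f :=
  Finset.card_le_one.1 h.le e (Finset.mem_filter.2 ⟨he, hve⟩) f (Finset.mem_filter.2 ⟨hf, hvf⟩)

/-- Two non-incident leaf edges `e`, `e'` of a subtree are joined by a path `e, g₁, g₂, …, e'`
(possibly `g₂ = e'`), and both `g₁` and `g₂` separate `e` from `e'`. -/
lemma exists_two_sides (hG : G.IsAcyclic) {E : Finset (Sym2 V)} (hEG : E ⊆ G.edgeFinset)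
    (hc : EdgeConnectedSet E) {e e' : Sym2 V} (he : e ∈ E) (he' : e' ∈ E) (hne : e ≠ e')
    (hni : ¬ EdgeInc e e') {v v' : V} (hv : v ∈ e) (hv' : v' ∈ e')
    (hdv : degT E v = 1) (hdv' : degT E v' = 1) :
    ∃ g₁ ∈ E, ∃ g₂ ∈ E, EdgeInc e g₁ ∧ EdgeInc g₁ g₂ ∧ ∃ S₁ S₂,
      IsSide E e e' g₁ S₁ ∧ IsSide E e e' g₂ S₂ ∧ g₁ ∈ S₂ := by
  obtain ⟨p, hp⟩ := (reachable_of_chain he hv (hc e he e' he') v' hv').exists_isPath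
  have key := fun (g : Sym2 V) (h1 : e ≠ g) (h2 : g ∈ p.edges) =>
    exists_side hG hEG he h1 hv hv' p hp h2
  have hnd := hp.isTrail.edges_nodup
  cases p with
  | nil => exact absurd (eq_of_degT_one hdv he hv he' hv') hne
  | @cons _ w₁ _ h₁ p =>
    have hE₁ := (SimpleGraph.fromEdgeSet_adj _).1 h₁ |>.1
    have hee := eq_of_degT_one hdv he hv hE₁ (Sym2.mem_mk_left _ _)
    cases p with
    | nil =>
      exact absurd (eq_of_degT_one hdv' he (hee ▸ Sym2.mem_mk_right _ _) he' hv') hne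
    | @cons _ w₂ _ h₂ p =>
      have hE₂ := (SimpleGraph.fromEdgeSet_adj _).1 h₂ |>.1
      have hi₁ : EdgeInc e s(w₁, w₂) := by
        refine ⟨?_, w₁, hee ▸ Sym2.mem_mk_right _ _, Sym2.mem_mk_left _ _⟩
        intro h
        rw [hee] at h
        simp [h] at hnd
      cases p with
      | nil =>
        exact absurd (eq_of_degT_one hdv' hE₂ (Sym2.mem_mk_right _ _) he' hv' ▸ hi₁) hni
      | @cons _ w₃ _ h₃ p =>
        have hE₃ := (SimpleGraph.fromEdgeSet_adj _).1 h₃ |>.1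
        simp only [SimpleGraph.Walk.edges_cons, List.nodup_cons, List.mem_cons, not_or] at hnd
        have hi₂ : EdgeInc s(w₁, w₂) s(w₂, w₃) :=
          ⟨hnd.2.1.1, w₂, Sym2.mem_mk_right _ _, Sym2.mem_mk_left _ _⟩
        obtain ⟨S₁, hS₁, -⟩ := key s(w₁, w₂) hi₁.1 (by simp)
        obtain ⟨S₂, hS₂, hm⟩ := key s(w₂, w₃) (by rw [hee]; exact hnd.1.2.1) (by simp)
        exact ⟨_, hE₂, _, hE₃, hi₁, hi₂, S₁, S₂, hS₁, hS₂, hm _ hE₂ hi₂.1 hi₁⟩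

/-- A boundary edge `e` meets the exterior only at its leaf endpoint `v`, which is internal in
`G`; so `d - 1` colours are blocked for `e`. -/
lemma card_extColours {d : ℕ} (hdeg : ∀ v : V, 2 ≤ G.degree v → G.degree v = d)
    {E : Finset (Sym2 V)} (hEG : E ⊆ G.edgeFinset) {e g : Sym2 V} (he : e ∈ intBd G E)
    (hg : g ∈ E) (heg : EdgeInc e g)
    (hni : ∀ e ∈ intBd G E, ∀ f ∈ intBd G E, e ≠ f → ¬ EdgeInc e f)
    {v : V} (hv : v ∈ e) (hdv : degT E v = 1) {χ : Sym2 V → Fin (d + 1)} (hχ : ProperECol G χ) :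
    (extColours G E χ e).card = d - 1 := by
  obtain ⟨heE, f₀, hf₀, hi₀⟩ := Finset.mem_filter.1 he
  have mem_ext : ∀ f, f ∈ extBd G E ↔ (f ∈ G.edgeSet ∧ f ∉ E) ∧ ∃ h ∈ E, EdgeInc f h := by
    intro f
    simp [extBd, Finset.mem_filter, Finset.mem_sdiff, SimpleGraph.mem_edgeFinset]
  have hvf : ∀ f ∈ extBd G E, EdgeInc f e → v ∈ f := by
    rintro f hf ⟨-, u, huf, hue⟩
    by_contra hvf
    have huv : u ≠ v := by rintro rfl; exact hvf huf
    have hee : e = s(u, v) := (Sym2.mem_and_mem_iff huv).1 ⟨hue, hv⟩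
    obtain ⟨hne, y, hye, hyg⟩ := heg
    have hyu : y = u := by
      rw [hee, Sym2.mem_iff] at hye
      rcases hye with h | h
      · exact h
      · subst h; exact absurd (eq_of_degT_one hdv heE hv hg hyg) hne
    subst hyu
    have hgi : EdgeInc g f := ⟨fun h => ((mem_ext f).1 hf).1.2 (h ▸ hg), y, hyg, huf⟩
    exact hni e he g (Finset.mem_filter.2 ⟨hg, f, hf, hgi⟩) hne ⟨hne, y, hue, hyg⟩
  have heG : e ∈ G.edgeSet := SimpleGraph.mem_edgeFinset.1 (hEG heE)
  have hset : ((extBd G E).filter fun f => EdgeInc f e) = (G.incidenceFinset v).erase e := by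
    ext f
    simp only [Finset.mem_filter, Finset.mem_erase, SimpleGraph.mem_incidenceFinset,
      SimpleGraph.incidenceSet, Set.mem_ofPred_eq]
    constructor
    · rintro ⟨h1, h2⟩
      exact ⟨h2.1, ((mem_ext f).1 h1).1.1, hvf f h1 h2⟩
    · rintro ⟨h1, h2, h3⟩
      have : EdgeInc f e := ⟨h1, v, h3, hv⟩
      exact ⟨(mem_ext f).2 ⟨⟨h2, fun h => h1 (eq_of_degT_one hdv h h3 heE hv)⟩, e, heE, this⟩,
        this⟩
  have hdv2 : G.degree v = d := by
    apply hdeg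
    rw [← SimpleGraph.card_incidenceFinset_eq_degree]
    refine Finset.one_lt_card.2 ⟨e, ?_, f₀, ?_, hi₀.1⟩
    · exact (SimpleGraph.mem_incidenceFinset _ _ _).2 ⟨heG, hv⟩
    · exact (SimpleGraph.mem_incidenceFinset _ _ _).2
        ⟨((mem_ext f₀).1 hf₀).1.1, hvf f₀ hf₀ hi₀.symm⟩
  unfold extColours
  rw [hset, Finset.card_image_of_injOn, Finset.card_erase_of_mem,
    SimpleGraph.card_incidenceFinset_eq_degree, hdv2]
  · exact (SimpleGraph.mem_incidenceFinset _ _ _).2 ⟨heG, hv⟩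
  · intro f hf h hh hc
    simp only [Finset.coe_erase, SimpleGraph.coe_incidenceFinset] at hf hh
    by_contra hne
    exact hχ f hf.1.1 h hh.1.1 ⟨hne, v, hf.1.2, hh.1.2⟩ hc

end TreeStructure

/-- in the tree block setting, assuming (A1) and (A2), for an interior
boundary edge `e` of a block `T_i` and a boundary condition `σ ∈ Ω^μ_E`, with
`C = σ(N(e) ∩ ∂T_i)`: (1) there is a universal constant `C₀ > 0` such that if
`|∂̄T_i| = 2` then each available colour for `e` has probability within `C₀/d` of `1/2`
under the uniform distribution on `Ω^σ_{E_i}`; (2) if `∂̄T_i = {e}` then all available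
colours for `e` are equinumerous among `Ω^σ_{E_i}`, each of probability exactly
`1/(k − |C|)`. -/
theorem tree_block_colour_proportions :
    ∃ C0 : ℝ, 0 < C0 ∧
      ∀ (V : Type) [Fintype V] [DecidableEq V] (G : SimpleGraph V) [DecidableRel G.Adj]
        (d : ℕ), 3 ≤ d → G.IsTree → (∀ v : V, 2 ≤ G.degree v → G.degree v = d) →
      ∀ ET : Finset (Sym2 V), IsSplitting G ET → 2 ≤ ET.card →
      ∀ μ : Sym2 V → Fin (d + 1), ProperECol G μ →
      ∀ (r : ℕ) (blocks : Fin r → Finset (Sym2 V)) (roots : Fin r → Sym2 V),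
        TreeBlockSetting G ET blocks roots →
        (∀ i, IsSplitting G (blocks i)) →
        (∀ (i : Fin r) (σ : OmegaE G (d + 1) ET μ),
          IsErgodicGen (treeGen G (d + 1) (blocks i) σ.1)) →
      ∀ (i : Fin r) (e : Sym2 V), e ∈ intBd G (blocks i) →
      ∀ σ : OmegaE G (d + 1) ET μ,
        (((intBd G (blocks i)).card = 2 →
          ∀ c : Fin (d + 1),
            c ∉ ((extBd G (blocks i)).filter fun f => EdgeInc f e).image σ.1 →
            |(Fintype.card {ξ : OmegaE G (d + 1) (blocks i) σ.1 // ξ.1 e = c} : ℝ) /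
                (Fintype.card (OmegaE G (d + 1) (blocks i) σ.1) : ℝ) - 1 / 2| ≤ C0 / d) ∧
        (intBd G (blocks i) = {e} →
          ∀ c c' : Fin (d + 1),
            c ∉ ((extBd G (blocks i)).filter fun f => EdgeInc f e).image σ.1 →
            c' ∉ ((extBd G (blocks i)).filter fun f => EdgeInc f e).image σ.1 →
            Fintype.card {ξ : OmegaE G (d + 1) (blocks i) σ.1 // ξ.1 e = c} =
              Fintype.card {ξ : OmegaE G (d + 1) (blocks i) σ.1 // ξ.1 e = c'} ∧
            (Fintype.card {ξ : OmegaE G (d + 1) (blocks i) σ.1 // ξ.1 e = c} : ℝ) /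
                (Fintype.card (OmegaE G (d + 1) (blocks i) σ.1) : ℝ) =
              1 / (((d : ℝ) + 1) -
                (((extBd G (blocks i)).filter fun f => EdgeInc f e).image σ.1).card))) := by
  refine ⟨1, one_pos, ?_⟩
  intro V _ _ G _ d hd hG hdeg ET hET hETc μ hμ r blocks roots hset hsplit herg i e he σ
  set E := blocks i with hE
  obtain ⟨hEG, -, hconn, hsp⟩ := hsplit i
  rw [← hE] at hEG hconn hsp
  have heE : e ∈ E := (Finset.mem_filter.1 he).1
  have heG : e ∈ G.edgeSet := SimpleGraph.mem_edgeFinset.1 (hEG heE)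
  have htot := count_total (E := E) (χ := σ.1) heG
  have hpos := colCount_pos (E := E) σ.2.1
  simp only [card_omega, card_omega_colour]
  change ((_ → ∀ c : Fin (d + 1), c ∉ extColours G E σ.1 e → _) ∧
    (_ → ∀ c c' : Fin (d + 1), c ∉ extColours G E σ.1 e → c' ∉ extColours G E σ.1 e → _ ∧
      _ = 1 / ((d : ℝ) + 1 - (extColours G E σ.1 e).card)))
  constructor
  · intro hcard c hcav
    have hE1 : E.card ≠ 1 := by
      intro h
      have : (intBd G E).card ≤ E.card := Finset.card_filter_le _ _
      omega
    obtain ⟨hfr, -, hni⟩ := hsp.resolve_left hE1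
    obtain ⟨e', he', hne⟩ := Finset.exists_mem_ne (by omega : 1 < (intBd G E).card) e
    have hbd : ∀ f ∈ intBd G E, f = e ∨ f = e' := by
      have h2 : ({e, e'} : Finset (Sym2 V)) = intBd G E := by
        apply Finset.eq_of_subset_of_card_le
        · intro f hf
          rcases Finset.mem_insert.1 hf with rfl | hf
          · exact he
          · rw [Finset.mem_singleton.1 hf]; exact he'
        · rw [hcard, Finset.card_pair hne.symm]
      intro f hf
      rw [← h2] at hf
      simpa using hf
    obtain ⟨v, hv, hdv⟩ := hfr e he
    obtain ⟨v', hv', hdv'⟩ := hfr e' he'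
    obtain ⟨g₁, hg₁, g₂, hg₂, hi₁, hi₂, S₁, S₂, hS₁, hS₂, hm⟩ :=
      exists_two_sides hG.isAcyclic hEG hconn heE (Finset.mem_filter.1 he').1 hne.symm
        (hni e he e' he' hne.symm) hv hv' hdv hdv'
    have hC := card_extColours hdeg hEG he hg₁ hi₁ hni hv hdv σ.2.1
    have hA : ((extColours G E σ.1 e)ᶜ).card = 2 := by
      rw [Finset.card_compl, hC, Fintype.card_fin]; omega
    obtain ⟨c', hc', hcc⟩ := Finset.exists_mem_ne
      (by omega : 1 < ((extColours G E σ.1 e)ᶜ).card) c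
    have hA2 : (extColours G E σ.1 e)ᶜ = {c, c'} := by
      symm
      apply Finset.eq_of_subset_of_card_le
      · intro f hf
        rcases Finset.mem_insert.1 hf with rfl | hf
        · exact Finset.mem_compl.2 hcav
        · rw [Finset.mem_singleton.1 hf]; exact hc'
      · rw [hA, Finset.card_pair hcc.symm]
    rw [hA2, Finset.sum_pair hcc.symm] at htot
    have hc'av := Finset.mem_compl.1 hc'
    have i1 := count_compare hd hbd hEG hg₁ hg₂ hi₁ hi₂ hS₁ hS₂ hm hcc.symm hc'av
    have i2 := count_compare hd hbd hEG hg₁ hg₂ hi₁ hi₂ hS₁ hS₂ hm hcc hcav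
    rw [htot] at hpos ⊢
    generalize colCount G E σ.1 (fun ξ => ξ e = c) = N at *
    generalize colCount G E σ.1 (fun ξ => ξ e = c') = N' at *
    clear hcav hC hA hc' hA2 hc'av hS₁ hS₂ herg hset hsplit hcc htot
    obtain ⟨n, rfl⟩ := Nat.exists_eq_add_of_le hd
    rw [show 3 + n - 1 = n + 2 by omega, show 3 + n - 2 = n + 1 by omega] at i1 i2
    have j1 : ((n : ℝ) + 1) * N ≤ (n + 2) * N' := by exact_mod_cast i1
    have j2 : ((n : ℝ) + 1) * N' ≤ (n + 2) * N := by exact_mod_cast i2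
    have j3 : (0 : ℝ) < N + N' := by exact_mod_cast hpos
    have hn : (0 : ℝ) ≤ n := n.cast_nonneg
    have hN : (0 : ℝ) ≤ N := N.cast_nonneg
    have hN' : (0 : ℝ) ≤ N' := N'.cast_nonneg
    push_cast
    have hd0 : (0 : ℝ) < 3 + n := by positivity
    rw [abs_le]
    constructor
    · rw [neg_le_sub_iff_le_add, div_add_div _ _ j3.ne' hd0.ne', div_le_div_iff₀ two_pos (by positivity)]
      nlinarith
    · rw [sub_le_iff_le_add, div_add_div _ _ hd0.ne' two_ne_zero, div_le_div_iff₀ j3 (by positivity)]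
      nlinarith
  · intro hbd c c' hc hc'
    have heq : ∀ z ∉ extColours G E σ.1 e, colCount G E σ.1 (fun ξ => ξ e = z) =
        colCount G E σ.1 (fun ξ => ξ e = c) := fun z hz =>
      le_antisymm (count_le_single hbd hc) (count_le_single hbd hz)
    refine ⟨(heq c' hc').symm, ?_⟩
    rw [Finset.sum_congr rfl (fun z hz => heq z (Finset.mem_compl.1 hz)), Finset.sum_const,
      smul_eq_mul, Finset.card_compl, Fintype.card_fin] at htot
    have hle : (extColours G E σ.1 e).card ≤ d + 1 := by
      simpa using Finset.card_le_univ (extColours G E σ.1 e)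
    rw [htot] at hpos ⊢
    have hN := (Nat.pos_of_mul_pos_right hpos)
    have hN' := (Nat.pos_of_mul_pos_left hpos)
    rw [Nat.cast_mul, Nat.cast_sub hle]
    push_cast
    rw [div_mul_cancel_right₀ (by positivity), one_div]
end
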